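/- arXiv:math-ph/0506042 — 9 statements merged into one kernel-verified Lean document; each statement's English description precedes it below -/
import Mathlib

section
/- Let ν, k, ω ∈ ℝ with k ≠ 0, set c = ω/k, and let η : ℝ → ℝ be three times continuously differentiable. Suppose that u(x,t) := η(kx − ωt) solves the Camassa–Holm equation u_t + 3uu_x = u_{xxt} + 2u_x u_{xx} + u u_{xxx} − 2ν u_x on all of ℝ². Then there exist constants A, B ∈ ℝ such that for every θ ∈ ℝ, k²(c − η(θ)) η′(θ)² + (2ν − c) η(θ)² + η(θ)³ + 2B η(θ) − 2A = 0. -/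
/-!
Along `u(x,t) = η(kx − ωt)` every partial derivative of `u` is a power of `k` and `-ω` times a
derivative of `η`, so the equation becomes a third-order ODE for `η`. After division by `k` that
ODE is the vanishing of the derivative of
`F = (2ν − c)η + (3/2)η² + k²(c − η)η″ − (k²/2)η′²`,
hence `F` is a constant `-B`. Multiplying `F + B = 0` by the integrating factor `2η′` gives the
vanishing of the derivative of `k²(c − η)η′² + (2ν − c)η² + η³ + 2Bη`, which is thus a constant
`2A`.
-/

/-- Chain rule in `x` along the phase `kx − ωt`. -/
lemma hasDerivAt_phase_space {f f' : ℝ → ℝ} (hf : ∀ θ, HasDerivAt f (f' θ) θ) (k ω x t : ℝ) :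
    HasDerivAt (fun x' => f (k * x' - ω * t)) (k * f' (k * x - ω * t)) x := by
  have h : HasDerivAt (fun x' : ℝ => k * x' - ω * t) k x := by
    simpa using ((hasDerivAt_id x).const_mul k).sub_const (ω * t)
  simpa [Function.comp_def, mul_comm] using (hf (k * x - ω * t)).comp x h

/-- Chain rule in `t` along the phase `kx − ωt`. -/
lemma hasDerivAt_phase_time {f f' : ℝ → ℝ} (hf : ∀ θ, HasDerivAt f (f' θ) θ) (k ω x t : ℝ) :
    HasDerivAt (fun t' => f (k * x - ω * t')) (-ω * f' (k * x - ω * t)) t := by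
  have h : HasDerivAt (fun t' : ℝ => k * x - ω * t') (-ω) t := by
    simpa using ((hasDerivAt_id t).const_mul ω).const_sub (k * x)
  simpa [Function.comp_def, mul_comm] using (hf (k * x - ω * t)).comp t h

/-- A travelling-wave solution `u(x,t) = η(kx − ωt)` of the Camassa–Holm
equation `u_t + 3uu_x = u_{xxt} + 2u_x u_{xx} + u u_{xxx} − 2ν u_x` satisfies, after one
integration, `k²(c − η)η′² + (2ν − c)η² + η³ + 2Bη − 2A = 0` for some constants `A, B`. -/
theorem stmt_0 (ν k ω : ℝ) (hk : k ≠ 0) (c : ℝ) (hc : c = ω / k)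
    (η : ℝ → ℝ) (hη : ContDiff ℝ 3 η)
    (u : ℝ → ℝ → ℝ) (hu : ∀ x t, u x t = η (k * x - ω * t))
    (hPDE : ∀ x t : ℝ,
      deriv (fun t' => u x t') t + 3 * u x t * deriv (fun x' => u x' t) x =
        deriv (fun t' => deriv (fun x₂ => deriv (fun x₁ => u x₁ t') x₂) x) t
          + 2 * deriv (fun x' => u x' t) x *
              deriv (fun x₂ => deriv (fun x₁ => u x₁ t) x₂) x
          + u x t *
              deriv (fun x₃ => deriv (fun x₂ => deriv (fun x₁ => u x₁ t) x₂) x₃) x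
          - 2 * ν * deriv (fun x' => u x' t) x) :
    ∃ A B : ℝ, ∀ θ : ℝ,
      k ^ 2 * (c - η θ) * (deriv η θ) ^ 2 + (2 * ν - c) * (η θ) ^ 2
        + (η θ) ^ 3 + 2 * B * η θ - 2 * A = 0 := by
  obtain ⟨p, hp⟩ : ∃ p, p = deriv η := ⟨_, rfl⟩
  obtain ⟨q, hq⟩ : ∃ q, q = deriv p := ⟨_, rfl⟩
  obtain ⟨r, hr⟩ : ∃ r, r = deriv q := ⟨_, rfl⟩
  have hp2 : ContDiff ℝ 2 p := by
    rw [hp]; exact ContDiff.deriv' (n := 2) (by norm_num; exact hη)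
  have hq1 : ContDiff ℝ 1 q := by
    rw [hq]; exact ContDiff.deriv' (n := 1) (by norm_num; exact hp2)
  have dη : ∀ θ, HasDerivAt η (p θ) θ := fun θ => by
    rw [hp]; exact (hη.differentiable (by norm_num) θ).hasDerivAt
  have dp : ∀ θ, HasDerivAt p (q θ) θ := fun θ => by
    rw [hq]; exact (hp2.differentiable (by norm_num) θ).hasDerivAt
  have dq : ∀ θ, HasDerivAt q (r θ) θ := fun θ => by
    rw [hr]; exact (hq1.differentiable (by norm_num) θ).hasDerivAt
  have hω : ω = c * k := by rw [hc]; field_simp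
  have ux : ∀ x t, deriv (fun x' => u x' t) x = k * p (k * x - ω * t) := fun x t => by
    simp only [hu]; exact (hasDerivAt_phase_space dη k ω x t).deriv
  have ut : ∀ x t, deriv (fun t' => u x t') t = -ω * p (k * x - ω * t) := fun x t => by
    simp only [hu]; exact (hasDerivAt_phase_time dη k ω x t).deriv
  have uxx : ∀ x t, deriv (fun x₂ => deriv (fun x₁ => u x₁ t) x₂) x
      = k * (k * q (k * x - ω * t)) := fun x t => by
    simp only [ux]; exact ((hasDerivAt_phase_space dp k ω x t).const_mul k).deriv
  have uxxx : ∀ x t, deriv (fun x₃ => deriv (fun x₂ => deriv (fun x₁ => u x₁ t) x₂) x₃) x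
      = k * (k * (k * r (k * x - ω * t))) := fun x t => by
    simp only [uxx]
    exact (((hasDerivAt_phase_space dq k ω x t).const_mul k).const_mul k).deriv
  have uxxt : ∀ x t, deriv (fun t' => deriv (fun x₂ => deriv (fun x₁ => u x₁ t') x₂) x) t
      = k * (k * (-ω * r (k * x - ω * t))) := fun x t => by
    simp only [uxx]
    exact (((hasDerivAt_phase_time dq k ω x t).const_mul k).const_mul k).deriv
  have ode : ∀ θ, (2 * ν - c) * p θ + 3 * η θ * p θ + c * k ^ 2 * r θ
      - k ^ 2 * (2 * p θ * q θ + η θ * r θ) = 0 := fun θ => by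
    have h := hPDE (θ / k) 0
    rw [ux, ut, uxx, uxxx, uxxt, hu] at h
    have e : k * (θ / k) - ω * 0 = θ := by field_simp; ring
    rw [e, hω] at h
    apply mul_left_cancel₀ hk
    linear_combination h
  obtain ⟨F, hF⟩ : ∃ F : ℝ → ℝ, F = fun θ => (2 * ν - c) * η θ + 3 / 2 * η θ ^ 2
      + k ^ 2 * ((c - η θ) * q θ) - k ^ 2 / 2 * p θ ^ 2 := ⟨_, rfl⟩
  have dF : ∀ θ, HasDerivAt F 0 θ := fun θ => by
    rw [hF]
    refine HasDerivAt.congr_deriv (((((dη θ).const_mul (2 * ν - c)).add (((dη θ).pow 2).const_mul (3 / 2))).add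
      ((((dη θ).const_sub c).mul (dq θ)).const_mul (k ^ 2))).sub
      (((dp θ).pow 2).const_mul (k ^ 2 / 2))) ?_
    norm_num
    linear_combination ode θ
  have cF : ∀ θ, F θ = F 0 := fun θ =>
    is_const_of_deriv_eq_zero (fun θ => (dF θ).differentiableAt) (fun θ => (dF θ).deriv) θ 0
  obtain ⟨G, hG⟩ : ∃ G : ℝ → ℝ, G = fun θ => k ^ 2 * ((c - η θ) * p θ ^ 2)
      + (2 * ν - c) * η θ ^ 2 + η θ ^ 3 + 2 * (-F 0) * η θ := ⟨_, rfl⟩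
  have dG : ∀ θ, HasDerivAt G 0 θ := fun θ => by
    rw [hG]
    refine HasDerivAt.congr_deriv (((((((dη θ).const_sub c).mul ((dp θ).pow 2)).const_mul (k ^ 2)).add
      (((dη θ).pow 2).const_mul (2 * ν - c))).add ((dη θ).pow 3)).add
      ((dη θ).const_mul (2 * (-F 0)))) ?_
    have h := cF θ
    rw [show F θ = _ from congrFun hF θ] at h
    norm_num
    linear_combination (2 * p θ) * h
  have cG : ∀ θ, G θ = G 0 := fun θ =>
    is_const_of_deriv_eq_zero (fun θ => (dG θ).differentiableAt) (fun θ => (dG θ).deriv) θ 0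
  refine ⟨G 0 / 2, -F 0, fun θ => ?_⟩
  have h := cG θ
  rw [show G θ = _ from congrFun hG θ] at h
  rw [← hp]
  linear_combination h
end

section
/- Fix ν ∈ ℝ and u¹, u², u³ ∈ ℝ with −ν < u¹ < u² < u³. Let κ ∈ ℝ be such that ∫_{u¹}^{u²} P_ν(λ)/√(R(λ)) dλ = 0, where P_ν(λ) := κ − (ν+u¹)(ν+u²)(ν+u³)/(2(λ+ν)). Then P_ν(u¹) < 0 and 0 < P_ν(u²) < P_ν(u³), and there is a unique λ* ∈ (u¹, u²) with P_ν(λ*) = 0. -/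
/-!
Since `(ν+u¹)(ν+u²)(ν+u³) > 0`, the function `P_ν` is strictly increasing on `(−ν, ∞)`. The weight
`1/√R` is positive on `(u¹, u²)`, so if `P_ν(u¹) ≥ 0` or `P_ν(u²) ≤ 0` then `P_ν/√R` has a strict
constant sign on `(u¹, u²)` and its integral cannot vanish. The zero then comes from the
intermediate value theorem, and is unique by monotonicity.

The sign argument needs `P_ν/√R` to be integrable (otherwise the integral is `0` by convention).
This holds because `1/√((λ−u¹)(u²−λ))` is the nonnegative derivative of
`arcsin((2λ−u¹−u²)/(u²−u¹))`, and the remaining factor is continuous on `[u¹, u²]`.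
-/

lemma intervalIntegrable_inv_sqrt_mul {a b : ℝ} (hab : a < b) :
    IntervalIntegrable (fun l => 1 / Real.sqrt ((l - a) * (b - l))) MeasureTheory.volume a b := by
  have hd : 0 < b - a := sub_pos.2 hab
  apply intervalIntegral.intervalIntegrable_deriv_of_nonneg
    (g := fun l => Real.arcsin ((2 * l - a - b) / (b - a)))
  · fun_prop
  · intro x hx
    rw [min_eq_left hab.le, max_eq_right hab.le] at hx
    obtain ⟨hx1, hx2⟩ := hx
    have h1 : (2 * x - a - b) / (b - a) ≠ -1 := by
      apply ne_of_gt
      rw [lt_div_iff₀ hd]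
      linarith
    have h2 : (2 * x - a - b) / (b - a) ≠ 1 := by
      apply ne_of_lt
      rw [div_lt_iff₀ hd]
      linarith
    have hi : HasDerivAt (fun l : ℝ => (2 * l - a - b) / (b - a)) (2 / (b - a)) x := by
      have := ((((hasDerivAt_id x).const_mul 2).sub_const a).sub_const b).div_const (b - a)
      simpa using this
    refine ((Real.hasDerivAt_arcsin h1 h2).comp x hi).congr_deriv ?_
    have hp : 0 < (x - a) * (b - x) := mul_pos (sub_pos.2 hx1) (sub_pos.2 hx2)
    have he : 1 - ((2 * x - a - b) / (b - a)) ^ 2 = (2 / (b - a)) ^ 2 * ((x - a) * (b - x)) := by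
      field_simp
      ring
    have hs := Real.sqrt_pos.2 hp
    rw [he, Real.sqrt_mul (by positivity), Real.sqrt_sq (by positivity)]
    field_simp
  · intro x _
    positivity

/-- For `−ν < u¹ < u² < u³`, if `κ` is chosen so that the a-cycle integral of
`P_ν/√R` vanishes, where `P_ν(λ) = κ − (ν+u¹)(ν+u²)(ν+u³)/(2(λ+ν))`, then
`P_ν(u¹) < 0 < P_ν(u²) < P_ν(u³)` and `P_ν` has a unique zero `λ* ∈ (u¹, u²)`. -/
theorem stmt_2 (ν u1 u2 u3 : ℝ) (h0 : -ν < u1) (h12 : u1 < u2) (h23 : u2 < u3)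
    (R : ℝ → ℝ) (hR : ∀ l, R l = (l + ν) * (l - u1) * (l - u2) * (l - u3))
    (κ : ℝ) (Pn : ℝ → ℝ)
    (hPn : ∀ l, Pn l = κ - (ν + u1) * (ν + u2) * (ν + u3) / (2 * (l + ν)))
    (hnorm : (∫ l in u1..u2, Pn l / Real.sqrt (R l)) = 0) :
    Pn u1 < 0 ∧ 0 < Pn u2 ∧ Pn u2 < Pn u3 ∧
      ∃! l : ℝ, l ∈ Set.Ioo u1 u2 ∧ Pn l = 0 := by
  have hC : 0 < (ν + u1) * (ν + u2) * (ν + u3) :=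
    mul_pos (mul_pos (by linarith) (by linarith)) (by linarith)
  have hmono : ∀ a b, -ν < a → a < b → Pn a < Pn b := by
    intro a b ha hab
    rw [hPn, hPn]
    have : (ν + u1) * (ν + u2) * (ν + u3) / (2 * (b + ν))
        < (ν + u1) * (ν + u2) * (ν + u3) / (2 * (a + ν)) :=
      div_lt_div_of_pos_left hC (by linarith) (by linarith)
    linarith
  have hcont : ContinuousOn Pn (Set.Icc u1 u2) := by
    rw [show Pn = _ from funext hPn]
    refine continuousOn_const.sub (continuousOn_const.div (by fun_prop) ?_)
    intro x hx
    have := hx.1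
    exact ne_of_gt (by linarith)
  have hRpos : ∀ x ∈ Set.Ioo u1 u2, 0 < Real.sqrt (R x) := by
    intro x hx
    obtain ⟨hx1, hx2⟩ := hx
    apply Real.sqrt_pos.2
    rw [hR, mul_assoc]
    exact mul_pos (mul_pos (by linarith) (by linarith))
      (mul_pos_of_neg_of_neg (by linarith) (by linarith))
  have hint : IntervalIntegrable (fun l => Pn l / Real.sqrt (R l))
      MeasureTheory.volume u1 u2 := by
    have hg : ContinuousOn (fun l => Pn l / Real.sqrt ((l + ν) * (u3 - l)))
        (Set.uIcc u1 u2) := by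
      rw [Set.uIcc_of_le h12.le]
      refine hcont.div (by fun_prop) ?_
      intro x hx
      obtain ⟨hx1, hx2⟩ := hx
      exact (Real.sqrt_pos.2 (mul_pos (by linarith) (by linarith))).ne'
    refine ((intervalIntegrable_inv_sqrt_mul h12).continuousOn_mul hg).congr ?_
    intro x hx
    rw [Set.uIoc_of_le h12.le] at hx
    obtain ⟨hx1, hx2⟩ := hx
    have he : R x = ((x + ν) * (u3 - x)) * ((x - u1) * (u2 - x)) := by
      rw [hR]
      ring
    have hp : 0 ≤ (x + ν) * (u3 - x) := mul_nonneg (by linarith) (by linarith)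
    simp only [he, Real.sqrt_mul hp, div_mul_div_comm, mul_one]
  have hneg : Pn u1 < 0 := by
    by_contra! h
    have := intervalIntegral.intervalIntegral_pos_of_pos_on hint
      (fun x hx => div_pos (h.trans_lt (hmono u1 x h0 hx.1)) (hRpos x hx)) h12
    exact this.ne' hnorm
  have hpos : 0 < Pn u2 := by
    by_contra! h
    have := intervalIntegral.intervalIntegral_pos_of_pos_on hint.neg
      (fun x hx => neg_pos.2 (div_neg_of_neg_of_pos
        ((hmono x u2 (h0.trans hx.1) hx.2).trans_le h) (hRpos x hx))) h12
    simp [intervalIntegral.integral_neg, hnorm] at this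
  refine ⟨hneg, hpos, hmono u2 u3 (h0.trans h12) h23, ?_⟩
  obtain ⟨z, hz, hz0⟩ := intermediate_value_Ioo h12.le hcont ⟨hneg, hpos⟩
  refine ⟨z, ⟨hz, hz0⟩, ?_⟩
  rintro y ⟨hy, hy0⟩
  rcases lt_trichotomy y z with h | h | h
  · have := hmono y z (h0.trans hy.1) h
    linarith
  · exact h
  · have := hmono z y (h0.trans hz.1) h
    linarith
end

section
/- Fix ν ∈ ℝ and u¹, u², u³ ∈ ℝ with −ν < u¹ < u² < u³. Then γ₂ := −I₂/I₀ + (1/2)(u¹+u²+u³−ν) I₁/I₀ satisfies γ₂ = (1/2)[u¹u² − ν u³ + (u³−u¹)(u²+ν) E(s)/K(s)], where s² = (u²−u¹)(u³+ν)/((u³−u¹)(u²+ν)). -/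
/-!
The Möbius-type substitution `l = φ(ψ) = -ν + (u1 + ν) / (1 - n sin² ψ)`, `n = (u2 - u1) / (u2 + ν)`,
maps `(0, π/2)` onto `(u1, u2)` and sends the branch points `-ν, u3` to `sin² ψ = ∞, 1/s²`. Hence
`dl / √R(l) = C dψ / Δ(ψ)` with `Δ = √(1 - s² sin² ψ)` and a constant `C > 0` (`integral_subst`), so
all three `I_k` become integrals of continuous functions of `ψ` over `[0, π/2]`, and `I₀ = C K`.

The third-kind part cancels because of an exact differential: with
`W(ψ) = sin ψ cos ψ Δ(ψ) / (1 - n sin² ψ)`, which is `√R(l) / (l + ν)` up to a constant, one has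
`-φ² + (u1 + u2 + u3 - ν) φ / 2 - (u1 u2 - ν u3) / 2 - (u3 - u1) (u2 + ν) Δ² / 2
  = -(u2 - u1) (u3 - u1) Δ W' / 2`.
Dividing by `Δ` and integrating gives the claim, since `W` vanishes at `0` and at `π/2`.
-/

open Set MeasureTheory Real

namespace EllipticGamma

/-- The substitution `ψ ↦ -ν + (u1 + ν) / (1 - n sin² ψ)`. -/
noncomputable def phi (ν u1 n ψ : ℝ) : ℝ := -ν + (u1 + ν) / (1 - n * sin ψ ^ 2)

/-- The primitive `sin ψ cos ψ √(1 - q sin² ψ) / (1 - n sin² ψ)`, where `q` is the squared modulus. -/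
noncomputable def W (n q ψ : ℝ) : ℝ :=
  sin ψ * cos ψ * √(1 - q * sin ψ ^ 2) / (1 - n * sin ψ ^ 2)

/-- The derivative of `W`. -/
noncomputable def dW (n q ψ : ℝ) : ℝ :=
  ((cos ψ ^ 2 - sin ψ ^ 2) * √(1 - q * sin ψ ^ 2)
      - q * (sin ψ * cos ψ) ^ 2 / √(1 - q * sin ψ ^ 2)) / (1 - n * sin ψ ^ 2)
    + 2 * n * (sin ψ * cos ψ) ^ 2 * √(1 - q * sin ψ ^ 2) / (1 - n * sin ψ ^ 2) ^ 2

lemma one_sub_pos {n : ℝ} (hn : 0 < n) (hn1 : n < 1) (ψ : ℝ) : 0 < 1 - n * sin ψ ^ 2 := by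
  nlinarith [sin_sq_le_one ψ, sq_nonneg (sin ψ)]

lemma hasDerivAt_sin_sq (c ψ : ℝ) :
    HasDerivAt (fun x => 1 - c * sin x ^ 2) (-(2 * c * (sin ψ * cos ψ))) ψ := by
  have := (((hasDerivAt_sin ψ).pow 2).const_mul c).const_sub 1
  refine HasDerivAt.congr_deriv this ?_
  push_cast
  ring

lemma hasDerivAt_phi {ν u1 n : ℝ} (hn : 0 < n) (hn1 : n < 1) (ψ : ℝ) :
    HasDerivAt (phi ν u1 n)
      ((u1 + ν) * (2 * n * (sin ψ * cos ψ)) / (1 - n * sin ψ ^ 2) ^ 2) ψ := by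
  have h := one_sub_pos hn hn1 ψ
  have := ((hasDerivAt_const ψ (u1 + ν)).div (hasDerivAt_sin_sq n ψ) h.ne').const_add (-ν)
  refine HasDerivAt.congr_deriv this ?_
  ring

lemma hasDerivAt_W {n q : ℝ} (hn : 0 < n) (hn1 : n < 1) (hq : 0 < q) (hq1 : q < 1) (ψ : ℝ) :
    HasDerivAt (W n q) (dW n q ψ) ψ := by
  have h := one_sub_pos hn hn1 ψ
  have hΔ := one_sub_pos hq hq1 ψ
  have := ((((hasDerivAt_sin ψ).mul (hasDerivAt_cos ψ)).mul
    ((hasDerivAt_sin_sq q ψ).sqrt hΔ.ne')).div (hasDerivAt_sin_sq n ψ) h.ne')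
  refine HasDerivAt.congr_deriv this ?_
  have hs := sqrt_pos.2 hΔ
  simp only [dW, Pi.mul_apply]
  field_simp
  ring

lemma continuous_sqrt (q : ℝ) : Continuous fun ψ => √(1 - q * sin ψ ^ 2) := by fun_prop

lemma continuous_dW {n q : ℝ} (hn : 0 < n) (hn1 : n < 1) (hq : 0 < q) (hq1 : q < 1) :
    Continuous (dW n q) := by
  have h := fun ψ => (one_sub_pos hn hn1 ψ).ne'
  have hΔ := fun ψ => (sqrt_pos.2 (one_sub_pos hq hq1 ψ)).ne'
  unfold dW
  refine Continuous.add (Continuous.div ?_ (by fun_prop) h)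
    (Continuous.div (by fun_prop) (by fun_prop) fun ψ => pow_ne_zero 2 (h ψ))
  exact Continuous.sub (by fun_prop) (Continuous.div (by fun_prop) (by fun_prop) hΔ)

lemma integral_dW {n q : ℝ} (hn : 0 < n) (hn1 : n < 1) (hq : 0 < q) (hq1 : q < 1) :
    ∫ ψ in (0:ℝ)..(π / 2), dW n q ψ = 0 := by
  rw [intervalIntegral.integral_eq_sub_of_hasDerivAt
    (fun ψ _ => hasDerivAt_W hn hn1 hq hq1 ψ)
    ((continuous_dW hn hn1 hq hq1).intervalIntegrable _ _)]
  simp [W]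

section
variable {ν u1 u2 u3 n q : ℝ}

/-- In terms of `ψ`, the quartic `R` is a perfect square times `1 - q sin² ψ`. -/
lemma R_phi (h0 : -ν < u1) (h12 : u1 < u2) (h23 : u2 < u3)
    (hnd : n = (u2 - u1) / (u2 + ν))
    (hqd : q = (u2 - u1) * (u3 + ν) / ((u3 - u1) * (u2 + ν)))
    (ψ : ℝ) (h : 0 < 1 - n * sin ψ ^ 2) :
    (phi ν u1 n ψ + ν) * (phi ν u1 n ψ - u1) * (phi ν u1 n ψ - u2) * (phi ν u1 n ψ - u3)
      = ((u1 + ν) * (sin ψ * cos ψ) / (1 - n * sin ψ ^ 2) ^ 2) ^ 2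
        * (n * (u2 - u1) * (u3 - u1)) * (1 - q * sin ψ ^ 2) := by
  have ha : u2 + ν ≠ 0 := by linarith
  have hb : u3 - u1 ≠ 0 := by linarith
  have e1 : phi ν u1 n ψ + ν = (u1 + ν) / (1 - n * sin ψ ^ 2) := by unfold phi; ring
  have e2 : phi ν u1 n ψ - u1 = (u1 + ν) * n * sin ψ ^ 2 / (1 - n * sin ψ ^ 2) := by
    unfold phi; field_simp; ring
  have hn' : n * (u2 + ν) = u2 - u1 := by rw [hnd]; field_simp
  have hq' : q * ((u3 - u1) * (u2 + ν)) = (u2 - u1) * (u3 + ν) := by rw [hqd]; field_simp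
  have hqn : q * (u3 - u1) = n * (u3 + ν) := by
    apply mul_right_cancel₀ ha; linear_combination hq' - (u3 + ν) * hn'
  have e3 : phi ν u1 n ψ - u2 = -((u2 - u1) * cos ψ ^ 2) / (1 - n * sin ψ ^ 2) := by
    unfold phi; rw [cos_sq']; field_simp; linear_combination (sin ψ ^ 2) * hn'
  have e4 : phi ν u1 n ψ - u3 = -((u3 - u1) * (1 - q * sin ψ ^ 2)) / (1 - n * sin ψ ^ 2) := by
    unfold phi; field_simp; linear_combination (-sin ψ ^ 2) * hqn
  rw [e1, e2, e3, e4]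
  field_simp

lemma phi_strictMonoOn (h0 : -ν < u1) (hn : 0 < n) (hn1 : n < 1) :
    StrictMonoOn (phi ν u1 n) (Icc 0 (π / 2)) := by
  intro x hx y hy hxy
  have h1 := one_sub_pos hn hn1 y
  have hs : sin x < sin y :=
    strictMonoOn_sin ⟨by linarith [hx.1, pi_pos], hx.2⟩ ⟨by linarith [hy.1, pi_pos], hy.2⟩ hxy
  have hs0 : 0 ≤ sin x := sin_nonneg_of_nonneg_of_le_pi hx.1 (by linarith [hx.2, pi_pos])
  have hlt : 1 - n * sin y ^ 2 < 1 - n * sin x ^ 2 := by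
    have : sin x ^ 2 < sin y ^ 2 := by nlinarith
    nlinarith
  have : (u1 + ν) / (1 - n * sin x ^ 2) < (u1 + ν) / (1 - n * sin y ^ 2) :=
    div_lt_div_of_pos_left (by linarith) h1 hlt
  unfold phi
  linarith

lemma phi_image (h0 : -ν < u1) (h12 : u1 < u2) (hnd : n = (u2 - u1) / (u2 + ν))
    (hn : 0 < n) (hn1 : n < 1) :
    phi ν u1 n '' Ioo 0 (π / 2) = Ioo u1 u2 := by
  have e0 : phi ν u1 n 0 = u1 := by simp [phi]
  have e1 : phi ν u1 n (π / 2) = u2 := by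
    have ha : u2 + ν ≠ 0 := by linarith
    have hb : u1 + ν ≠ 0 := by linarith
    have : 1 - n = (u1 + ν) / (u2 + ν) := by rw [hnd]; field_simp; ring
    simp only [phi, sin_pi_div_two, one_pow, mul_one, this]
    field_simp
    ring
  have hp : (0:ℝ) ≤ π / 2 := by positivity
  have hm := phi_strictMonoOn h0 hn hn1
  apply Subset.antisymm
  · rintro _ ⟨x, hx, rfl⟩
    have := hm (left_mem_Icc.2 hp) (Ioo_subset_Icc_self hx) hx.1
    have := hm (Ioo_subset_Icc_self hx) (right_mem_Icc.2 hp) hx.2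
    constructor <;> linarith
  · have := intermediate_value_Ioo hp
      (fun x _ => (hasDerivAt_phi (ν := ν) (u1 := u1) hn hn1 x).continuousAt.continuousWithinAt)
    rwa [e0, e1] at this

/-- The substitution `l = φ(ψ)`. No integrability of `f / √R` is assumed, since the change of
variables on the open interval holds for junk values as well. -/
lemma integral_subst (h0 : -ν < u1) (h12 : u1 < u2) (h23 : u2 < u3)
    (hnd : n = (u2 - u1) / (u2 + ν))
    (hqd : q = (u2 - u1) * (u3 + ν) / ((u3 - u1) * (u2 + ν)))
    (hn : 0 < n) (hn1 : n < 1) (hq : 0 < q) (hq1 : q < 1) (f : ℝ → ℝ) :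
    ∫ l in u1..u2, f l / √((l + ν) * (l - u1) * (l - u2) * (l - u3))
      = 2 * n / √(n * (u2 - u1) * (u3 - u1)) *
        ∫ ψ in (0:ℝ)..(π / 2), f (phi ν u1 n ψ) / √(1 - q * sin ψ ^ 2) := by
  have hp : (0:ℝ) ≤ π / 2 := by positivity
  rw [← intervalIntegral.integral_const_mul, intervalIntegral.integral_of_le h12.le,
    intervalIntegral.integral_of_le hp, integral_Ioc_eq_integral_Ioo, integral_Ioc_eq_integral_Ioo,
    ← phi_image h0 h12 hnd hn hn1,
    integral_image_eq_integral_abs_deriv_smul measurableSet_Ioo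
      (fun x _ => (hasDerivAt_phi hn hn1 x).hasDerivWithinAt)
      ((phi_strictMonoOn h0 hn hn1).injOn.mono Ioo_subset_Icc_self)]
  refine setIntegral_congr_fun measurableSet_Ioo fun ψ hψ => ?_
  have h := one_sub_pos hn hn1 ψ
  have hΔ := one_sub_pos hq hq1 ψ
  have hs : 0 < sin ψ := sin_pos_of_pos_of_lt_pi hψ.1 (by linarith [hψ.2, pi_pos])
  have hc : 0 < cos ψ := cos_pos_of_mem_Ioo ⟨by linarith [hψ.1, pi_pos], hψ.2⟩
  have hu : 0 < u1 + ν := by linarith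
  have hm : 0 < n * (u2 - u1) * (u3 - u1) :=
    mul_pos (mul_pos hn (by linarith)) (by linarith)
  have hA : 0 < (u1 + ν) * (sin ψ * cos ψ) / (1 - n * sin ψ ^ 2) ^ 2 := by positivity
  have hd : 0 < (u1 + ν) * (2 * n * (sin ψ * cos ψ)) / (1 - n * sin ψ ^ 2) ^ 2 := by positivity
  simp only [smul_eq_mul]
  rw [R_phi h0 h12 h23 hnd hqd ψ h, sqrt_mul (by positivity), sqrt_mul (by positivity),
    sqrt_sq hA.le, abs_of_pos hd]
  have h1 := sqrt_pos.2 hm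
  have h2 := sqrt_pos.2 hΔ
  generalize √(n * (u2 - u1) * (u3 - u1)) = r at *
  generalize √(1 - q * sin ψ ^ 2) = d at *
  field_simp

/-- The exact differential that eliminates the integral of the third kind. -/
lemma exact_identity (h0 : -ν < u1) (h12 : u1 < u2) (h23 : u2 < u3)
    (hnd : n = (u2 - u1) / (u2 + ν))
    (hqd : q = (u2 - u1) * (u3 + ν) / ((u3 - u1) * (u2 + ν)))
    (hn : 0 < n) (hn1 : n < 1) (hq : 0 < q) (hq1 : q < 1) (ψ : ℝ) :
    -(phi ν u1 n ψ ^ 2 / √(1 - q * sin ψ ^ 2))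
      + (1 / 2) * (u1 + u2 + u3 - ν) * (phi ν u1 n ψ / √(1 - q * sin ψ ^ 2))
      = (1 / 2) * (u1 * u2 - ν * u3) * (1 / √(1 - q * sin ψ ^ 2))
        + (1 / 2) * ((u3 - u1) * (u2 + ν)) * √(1 - q * sin ψ ^ 2)
        - (1 / 2) * ((u2 - u1) * (u3 - u1)) * dW n q ψ := by
  have h := one_sub_pos hn hn1 ψ
  have hΔ := one_sub_pos hq hq1 ψ
  have hd := sqrt_pos.2 hΔ
  have hd2 := sq_sqrt hΔ.le
  have ha : u2 + ν ≠ 0 := by linarith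
  have hb : u3 - u1 ≠ 0 := by linarith
  unfold phi dW
  rw [mul_pow, cos_sq']
  generalize √(1 - q * sin ψ ^ 2) = d at *
  generalize sin ψ ^ 2 = t at *
  have hn' : n * (u2 + ν) = u2 - u1 := by rw [hnd]; field_simp
  have hq' : q * ((u3 - u1) * (u2 + ν)) = (u2 - u1) * (u3 + ν) := by rw [hqd]; field_simp
  have hqn : q * (u3 - u1) = n * (u3 + ν) := by
    apply mul_right_cancel₀ ha; linear_combination hq' - (u3 + ν) * hn'
  -- Everything is parametrized rationally by `n`, `a = u2 + ν`, `b = u3 - u1` and `ν`.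
  obtain ⟨a, rfl⟩ : ∃ a, u2 = a - ν := ⟨u2 + ν, by ring⟩
  obtain ⟨b, rfl⟩ : ∃ b, u3 = b + u1 := ⟨u3 - u1, by ring⟩
  obtain rfl : u1 = a - ν - n * a := by linear_combination hn'
  have hb' : b ≠ 0 := by simpa using hb
  have hqe : q = n * (b + a - n * a) / b := by
    field_simp; linear_combination hqn
  field_simp
  rw [hd2, hqe]
  field_simp
  ring

end

end EllipticGamma

open EllipticGamma in

/-- explicit elliptic form of the normalization constant
`γ₂ = −I₂/I₀ + (1/2)(u¹+u²+u³−ν)I₁/I₀ = (1/2)[u¹u² − νu³ + (u³−u¹)(u²+ν)E(s)/K(s)]`. -/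
theorem stmt_5 (ν u1 u2 u3 : ℝ) (h0 : -ν < u1) (h12 : u1 < u2) (h23 : u2 < u3)
    (R : ℝ → ℝ) (hR : ∀ l, R l = (l + ν) * (l - u1) * (l - u2) * (l - u3))
    (I0 I1 I2 : ℝ)
    (hI0 : I0 = ∫ l in u1..u2, 1 / Real.sqrt (R l))
    (hI1 : I1 = ∫ l in u1..u2, l / Real.sqrt (R l))
    (hI2 : I2 = ∫ l in u1..u2, l ^ 2 / Real.sqrt (R l))
    (γ2 : ℝ) (hγ2 : γ2 = -I2 / I0 + (1 / 2) * (u1 + u2 + u3 - ν) * (I1 / I0))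
    (ssq : ℝ) (hssq : ssq = (u2 - u1) * (u3 + ν) / ((u3 - u1) * (u2 + ν)))
    (K : ℝ)
    (hK : K = ∫ ψ in (0:ℝ)..(Real.pi / 2), 1 / Real.sqrt (1 - ssq * Real.sin ψ ^ 2))
    (E : ℝ)
    (hE : E = ∫ ψ in (0:ℝ)..(Real.pi / 2), Real.sqrt (1 - ssq * Real.sin ψ ^ 2)) :
    γ2 = (1 / 2) * (u1 * u2 - ν * u3 + (u3 - u1) * (u2 + ν) * (E / K)) := by
  have ha : 0 < u2 + ν := by linarith
  have hb : 0 < u3 - u1 := by linarith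
  obtain ⟨n, hnd⟩ : ∃ n, n = (u2 - u1) / (u2 + ν) := ⟨_, rfl⟩
  have hn : 0 < n := by rw [hnd]; exact div_pos (by linarith) ha
  have hn1 : n < 1 := by rw [hnd, div_lt_one ha]; linarith
  have hq : 0 < ssq := by
    rw [hssq]; exact div_pos (mul_pos (by linarith) (by linarith)) (mul_pos hb ha)
  have hq1 : ssq < 1 := by
    rw [hssq, div_lt_one (mul_pos hb ha)]
    nlinarith [mul_pos (sub_pos.2 h23) (sub_pos.2 h0)]
  have hsub := integral_subst h0 h12 h23 hnd hssq hn hn1 hq hq1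
  have hC : 0 < 2 * n / √(n * (u2 - u1) * (u3 - u1)) := by
    have : 0 < u2 - u1 := by linarith
    positivity
  have hΔ := fun ψ => sqrt_pos.2 (one_sub_pos hq hq1 ψ)
  have hphi : Continuous (phi ν u1 n) :=
    continuous_iff_continuousAt.2 fun x => (hasDerivAt_phi hn hn1 x).continuousAt
  have cont : ∀ g : ℝ → ℝ, Continuous g →
      IntervalIntegrable (fun ψ => g ψ / √(1 - ssq * sin ψ ^ 2)) volume 0 (π / 2) := fun g hg =>
    (hg.div (continuous_sqrt ssq) fun ψ => (hΔ ψ).ne').intervalIntegrable _ _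
  have hKpos : 0 < K := by
    rw [hK]
    exact intervalIntegral.intervalIntegral_pos_of_pos (cont _ continuous_const)
      (fun ψ => one_div_pos.2 (hΔ ψ)) (by positivity)
  simp only [hR] at hI0 hI1 hI2
  rw [hsub (fun _ => 1), ← hK] at hI0
  rw [hsub (fun l => l)] at hI1
  rw [hsub (fun l => l ^ 2)] at hI2
  have key : -(∫ ψ in (0:ℝ)..(π / 2), phi ν u1 n ψ ^ 2 / √(1 - ssq * sin ψ ^ 2))
      + (1 / 2) * (u1 + u2 + u3 - ν)
        * (∫ ψ in (0:ℝ)..(π / 2), phi ν u1 n ψ / √(1 - ssq * sin ψ ^ 2))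
      = (1 / 2) * (u1 * u2 - ν * u3) * K + (1 / 2) * ((u3 - u1) * (u2 + ν)) * E := by
    have hint := intervalIntegral.integral_congr (μ := volume) (a := 0) (b := π / 2)
      fun ψ _ => exact_identity h0 h12 h23 hnd hssq hn hn1 hq hq1 ψ
    have i0 := cont _ (continuous_const (y := (1:ℝ)))
    have i1 := cont _ hphi
    have i2 := cont (fun ψ => phi ν u1 n ψ ^ 2) (hphi.pow 2)
    have i2n : IntervalIntegrable (fun ψ => -(phi ν u1 n ψ ^ 2 / √(1 - ssq * sin ψ ^ 2)))
      volume 0 (π / 2) := i2.neg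
    have iE := (continuous_sqrt ssq).intervalIntegrable (μ := volume) 0 (π / 2)
    have iW := (continuous_dW hn hn1 hq hq1).intervalIntegrable (μ := volume) 0 (π / 2)
    rw [intervalIntegral.integral_add i2n (i1.const_mul _),
      intervalIntegral.integral_sub ((i0.const_mul _).add (iE.const_mul _)) (iW.const_mul _),
      intervalIntegral.integral_add (i0.const_mul _) (iE.const_mul _),
      intervalIntegral.integral_neg] at hint
    simp only [intervalIntegral.integral_const_mul] at hint
    rw [integral_dW hn hn1 hq hq1, ← hK, ← hE] at hint
    linarith
  rw [hγ2, hI0, hI1, hI2]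
  generalize 2 * n / √(n * (u2 - u1) * (u3 - u1)) = C at *
  field_simp
  linear_combination 2 * key
end

section
/- Fix ν ∈ ℝ and u¹, u², u³ ∈ ℝ with −ν < u¹ < u² < u³. Then γ₁ := −I₁/I₀ satisfies γ₁ = ν − (u¹+ν) Π(ρ², s) / K(s), where s² = (u²−u¹)(u³+ν)/((u³−u¹)(u²+ν)), ρ² = (u²−u¹)/(u²+ν), and Π(n, s) = ∫₀^{π/2} (1 − n sin²ψ)^{−1} (1 − s² sin²ψ)^{−1/2} dψ is the complete elliptic integral of the third kind (equal to the paper's Λ(K(s), ρ, s)). -/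
/-!
The substitution `l + ν = (u1 + ν) / (1 - ρ² sin² ψ)` maps `[0, π/2]` monotonically onto `[u1, u2]`
and turns `dl / √R(l)` into `C dψ / √(1 - s² sin² ψ)` with `C = 2 / √((u3 - u1) (u2 + ν))`
(`integral_div_sqrt_quartic`). Hence `I₀ = C K` and, since `l = -ν + (u1 + ν) / (1 - ρ² sin² ψ)`,
`I₁ = C (-ν K + (u1 + ν) Π)`. Dividing by `I₀` gives the claim, because `C` and `K` are positive.
-/

lemma one_sub_mul_sin_sq_pos {n : ℝ} (hn : n < 1) (ψ : ℝ) :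
    0 < 1 - n * Real.sin ψ ^ 2 := by
  have h1 := Real.sin_sq_add_cos_sq ψ
  nlinarith [sq_nonneg (Real.sin ψ), sq_nonneg (Real.cos ψ), mul_nonneg (sub_nonneg.2 hn.le)
    (sq_nonneg (Real.sin ψ))]

/-- The derivative of the substitution `ψ ↦ a / (1 - n sin² ψ) - ν`. -/
lemma hasDerivAt_subst {n : ℝ} (hn : n < 1) (a ν ψ : ℝ) :
    HasDerivAt (fun ψ => a / (1 - n * Real.sin ψ ^ 2) - ν)
      (2 * a * n * Real.sin ψ * Real.cos ψ / (1 - n * Real.sin ψ ^ 2) ^ 2) ψ := by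
  have hD := (one_sub_mul_sin_sq_pos hn ψ).ne'
  have h1 : HasDerivAt (fun ψ => 1 - n * Real.sin ψ ^ 2)
      (-(n * (2 * Real.sin ψ * Real.cos ψ))) ψ := by
    simpa using (((Real.hasDerivAt_sin ψ).pow 2).const_mul n).const_sub 1
  have h2 := ((hasDerivAt_const ψ a).div h1 hD).sub_const ν
  refine h2.congr_deriv ?_
  ring

/-- Under the substitution, with `x = sin ψ` and `y = cos ψ`, the quartic `R` becomes
`(d / C)² (1 - s² x²)`, where `d` is the derivative of the substitution and
`C² = 4 / ((u3 - u1) (u2 + ν))`. -/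
lemma quartic_subst (ν u1 u2 u3 x y : ℝ) (h0 : -ν < u1) (h12 : u1 < u2) (h23 : u2 < u3)
    (hxy : x ^ 2 + y ^ 2 = 1) (hD : 1 - (u2 - u1) / (u2 + ν) * x ^ 2 ≠ 0) (l d : ℝ)
    (hl : l = (u1 + ν) / (1 - (u2 - u1) / (u2 + ν) * x ^ 2) - ν)
    (hd : d = 2 * (u1 + ν) * ((u2 - u1) / (u2 + ν)) * x * y /
      (1 - (u2 - u1) / (u2 + ν) * x ^ 2) ^ 2) :
    (l + ν) * (l - u1) * (l - u2) * (l - u3) =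
      d ^ 2 * ((u3 - u1) * (u2 + ν) / 4) *
        (1 - (u2 - u1) * (u3 + ν) / ((u3 - u1) * (u2 + ν)) * x ^ 2) := by
  have hb : u2 + ν ≠ 0 := by linarith
  have hc : u3 - u1 ≠ 0 := by linarith
  set D := 1 - (u2 - u1) / (u2 + ν) * x ^ 2 with hDdef
  have hx : (u2 - u1) * x ^ 2 = (u2 + ν) * (1 - D) := by rw [hDdef]; field_simp; ring
  have e0 : l + ν = (u1 + ν) / D := by rw [hl]; ring
  have e1 : l - u1 = (u1 + ν) * ((u2 - u1) / (u2 + ν)) * x ^ 2 / D := by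
    rw [hl]; field_simp; linear_combination (-(u1 + ν)) * hx
  have e2 : l - u2 = -((u2 - u1) * y ^ 2 / D) := by
    rw [hl]; field_simp; linear_combination (u2 - u1) * hxy - hx
  have e3 : l - u3 = -((u3 - u1) *
      (1 - (u2 - u1) * (u3 + ν) / ((u3 - u1) * (u2 + ν)) * x ^ 2) / D) := by
    rw [hl]; field_simp; linear_combination (-(u3 + ν)) * hx
  rw [e0, e1, e2, e3, hd]
  field_simp
  ring

/-- The change of variables, for an arbitrary weight `h`. No regularity or integrability of `h` is
needed, since the substitution is monotone. -/
lemma integral_div_sqrt_quartic (ν u1 u2 u3 : ℝ) (h0 : -ν < u1) (h12 : u1 < u2) (h23 : u2 < u3)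
    (h : ℝ → ℝ) {ssq ρsq : ℝ}
    (hssq : ssq = (u2 - u1) * (u3 + ν) / ((u3 - u1) * (u2 + ν)))
    (hρsq : ρsq = (u2 - u1) / (u2 + ν)) (hs1 : ssq < 1) (hρ1 : ρsq < 1) :
    ∫ l in u1..u2, h l / Real.sqrt ((l + ν) * (l - u1) * (l - u2) * (l - u3)) =
      ∫ ψ in (0:ℝ)..(Real.pi / 2), 1 / Real.sqrt ((u3 - u1) * (u2 + ν) / 4) *
        (h ((u1 + ν) / (1 - ρsq * Real.sin ψ ^ 2) - ν) /
          Real.sqrt (1 - ssq * Real.sin ψ ^ 2)) := by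
  have hpi : (0:ℝ) ≤ Real.pi / 2 := by positivity
  have ha : 0 < u1 + ν := by linarith
  have hb : 0 < u2 + ν := by linarith
  have hc : 0 < u3 - u1 := by linarith
  have hρ0 : 0 < ρsq := by rw [hρsq]; exact div_pos (by linarith) hb
  have hd0 : ∀ ψ ∈ Set.Ioo (0:ℝ) (Real.pi / 2), 0 < 2 * (u1 + ν) * ρsq * Real.sin ψ * Real.cos ψ /
      (1 - ρsq * Real.sin ψ ^ 2) ^ 2 := by
    intro ψ hψ
    have hsin : 0 < Real.sin ψ := Real.sin_pos_of_pos_of_lt_pi hψ.1 (by linarith [hψ.2])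
    have hcos : 0 < Real.cos ψ := Real.cos_pos_of_mem_Ioo ⟨by linarith [hψ.1], hψ.2⟩
    have hD := one_sub_mul_sin_sq_pos hρ1 ψ
    positivity
  have key := intervalIntegral.integral_comp_mul_deriv_of_deriv_nonneg
    (a := 0) (b := Real.pi / 2)
    (f := fun ψ => (u1 + ν) / (1 - ρsq * Real.sin ψ ^ 2) - ν)
    (f' := fun ψ => 2 * (u1 + ν) * ρsq * Real.sin ψ * Real.cos ψ /
      (1 - ρsq * Real.sin ψ ^ 2) ^ 2)
    (g := fun l => h l / Real.sqrt ((l + ν) * (l - u1) * (l - u2) * (l - u3)))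
    (fun ψ _ => (hasDerivAt_subst hρ1 _ ν ψ).continuousAt.continuousWithinAt)
    (fun ψ _ => hasDerivAt_subst hρ1 _ ν ψ)
    (fun ψ hψ => (hd0 ψ (by simpa [min_eq_left hpi, max_eq_right hpi] using hψ)).le)
  have f0 : (u1 + ν) / (1 - ρsq * Real.sin 0 ^ 2) - ν = u1 := by simp
  have f1 : (u1 + ν) / (1 - ρsq * Real.sin (Real.pi / 2) ^ 2) - ν = u2 := by
    have : 1 - ρsq * Real.sin (Real.pi / 2) ^ 2 = (u1 + ν) / (u2 + ν) := by
      rw [hρsq, Real.sin_pi_div_two]; field_simp; ring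
    rw [this]; field_simp; ring
  simp only [f0, f1] at key
  rw [← key]
  rw [intervalIntegral.integral_of_le hpi, intervalIntegral.integral_of_le hpi,
    MeasureTheory.integral_Ioc_eq_integral_Ioo, MeasureTheory.integral_Ioc_eq_integral_Ioo]
  refine MeasureTheory.setIntegral_congr_fun measurableSet_Ioo fun ψ hψ => ?_
  have hD := one_sub_mul_sin_sq_pos hρ1 ψ
  have hE := one_sub_mul_sin_sq_pos hs1 ψ
  have hd := hd0 ψ hψ
  simp only [Function.comp]
  have hq := quartic_subst ν u1 u2 u3 (Real.sin ψ) (Real.cos ψ) h0 h12 h23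
    (Real.sin_sq_add_cos_sq ψ) (by rw [← hρsq]; exact hD.ne') _ _ rfl rfl
  rw [← hρsq, ← hssq] at hq
  rw [hq, Real.sqrt_mul (by positivity), Real.sqrt_mul (by positivity), Real.sqrt_sq hd.le]
  set d := 2 * (u1 + ν) * ρsq * Real.sin ψ * Real.cos ψ / (1 - ρsq * Real.sin ψ ^ 2) ^ 2
  have h1 : 0 < Real.sqrt ((u3 - u1) * (u2 + ν) / 4) := Real.sqrt_pos.2 (by positivity)
  have h2 : 0 < Real.sqrt (1 - ssq * Real.sin ψ ^ 2) := Real.sqrt_pos.2 hE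
  field_simp

/-- explicit elliptic form of the normalization constant
`γ₁ = −I₁/I₀ = ν − (u¹+ν)·Π(ρ², s)/K(s)`, with `Π` the complete elliptic integral of the
third kind, `s² = (u²−u¹)(u³+ν)/((u³−u¹)(u²+ν))` and `ρ² = (u²−u¹)/(u²+ν)`. -/
theorem stmt_6 (ν u1 u2 u3 : ℝ) (h0 : -ν < u1) (h12 : u1 < u2) (h23 : u2 < u3)
    (R : ℝ → ℝ) (hR : ∀ l, R l = (l + ν) * (l - u1) * (l - u2) * (l - u3))
    (I0 I1 : ℝ)
    (hI0 : I0 = ∫ l in u1..u2, 1 / Real.sqrt (R l))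
    (hI1 : I1 = ∫ l in u1..u2, l / Real.sqrt (R l))
    (γ1 : ℝ) (hγ1 : γ1 = -I1 / I0)
    (ssq : ℝ) (hssq : ssq = (u2 - u1) * (u3 + ν) / ((u3 - u1) * (u2 + ν)))
    (ρsq : ℝ) (hρsq : ρsq = (u2 - u1) / (u2 + ν))
    (K : ℝ)
    (hK : K = ∫ ψ in (0:ℝ)..(Real.pi / 2), 1 / Real.sqrt (1 - ssq * Real.sin ψ ^ 2))
    (Pi3 : ℝ)
    (hPi3 : Pi3 = ∫ ψ in (0:ℝ)..(Real.pi / 2),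
        1 / ((1 - ρsq * Real.sin ψ ^ 2) * Real.sqrt (1 - ssq * Real.sin ψ ^ 2))) :
    γ1 = ν - (u1 + ν) * Pi3 / K := by
  have ha : 0 < u1 + ν := by linarith
  have hb : 0 < u2 + ν := by linarith
  have hc : 0 < u3 - u1 := by linarith
  have hρ1 : ρsq < 1 := by rw [hρsq, div_lt_one hb]; linarith
  have hs1 : ssq < 1 := by
    rw [hssq, div_lt_one (by positivity)]
    nlinarith [mul_pos ha (sub_pos.2 h23)]
  have hD := one_sub_mul_sin_sq_pos hρ1
  have hE : ∀ ψ, 0 < Real.sqrt (1 - ssq * Real.sin ψ ^ 2) :=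
    fun ψ => Real.sqrt_pos.2 (one_sub_mul_sin_sq_pos hs1 ψ)
  have hcK : Continuous fun ψ => 1 / Real.sqrt (1 - ssq * Real.sin ψ ^ 2) :=
    continuous_const.div (by fun_prop) fun ψ => (hE ψ).ne'
  have hcP : Continuous fun ψ =>
      1 / ((1 - ρsq * Real.sin ψ ^ 2) * Real.sqrt (1 - ssq * Real.sin ψ ^ 2)) :=
    continuous_const.div (by fun_prop) fun ψ => (mul_pos (hD ψ) (hE ψ)).ne'
  have hK0 : 0 < K := by
    rw [hK]
    exact intervalIntegral.intervalIntegral_pos_of_pos_on (hcK.intervalIntegrable _ _)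
      (fun ψ _ => one_div_pos.2 (hE ψ)) (by positivity)
  have hC0 : 0 < 1 / Real.sqrt ((u3 - u1) * (u2 + ν) / 4) :=
    one_div_pos.2 (Real.sqrt_pos.2 (by positivity))
  have e0 := integral_div_sqrt_quartic ν u1 u2 u3 h0 h12 h23 (fun _ => 1) hssq hρsq hs1 hρ1
  have e1 := integral_div_sqrt_quartic ν u1 u2 u3 h0 h12 h23 (fun l => l) hssq hρsq hs1 hρ1
  rw [intervalIntegral.integral_const_mul] at e0 e1
  simp only [← hR] at e0 e1
  rw [← hI0, ← hK] at e0
  have split : ∫ ψ in (0:ℝ)..(Real.pi / 2), ((u1 + ν) / (1 - ρsq * Real.sin ψ ^ 2) - ν) /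
      Real.sqrt (1 - ssq * Real.sin ψ ^ 2) = (u1 + ν) * Pi3 - ν * K := by
    rw [hK, hPi3, ← intervalIntegral.integral_const_mul, ← intervalIntegral.integral_const_mul,
      ← intervalIntegral.integral_sub ((hcP.const_mul _).intervalIntegrable _ _)
        ((hcK.const_mul _).intervalIntegrable _ _)]
    refine intervalIntegral.integral_congr fun ψ _ => ?_
    have h1 := (hD ψ).ne'
    have h2 := (hE ψ).ne'
    field_simp
  rw [← hI1, split] at e1
  rw [hγ1, e0, e1]
  field_simp
  ring
end

section
/- Let ν ∈ ℝ and let u : ℝ² → ℝ be smooth. Set m = u − u_{xx} and suppose m + ν > 0 everywhere and m_t = −2m u_x − u m_x − 2ν u_x (the Camassa–Holm equation). Then ρ := √(m + ν) satisfies ρ_t = −(uρ)_x; i.e., the substitution ρ² = m + ν transforms the Camassa–Holm equation into the associated Camassa–Holm system ρ_t = −(uρ)_x, ρ² = u − u_{xx} + ν. -/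
/-!
Along each line, `√(m + ν)` is differentiable because `m` is smooth (the `x`-derivative of a jointly
smooth function is jointly smooth, `contDiff_deriv_fst`) and `m + ν > 0`. The chain rule gives
`ρ_t = m_t / (2ρ)` and `(uρ)_x = u_x ρ + u m_x / (2ρ)`; since the Camassa–Holm equation reads
`m_t = -2 (m + ν) u_x - u m_x` and `m + ν = ρ²`, dividing it by `2ρ` is the claim.
-/

/-- Joint smoothness is inherited by the partial derivative in the first variable, which equals
the Fréchet derivative applied to the constant vector `(1, 0)`. -/
theorem contDiff_deriv_fst {f : ℝ → ℝ → ℝ}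
    (hf : ContDiff ℝ (⊤ : ℕ∞) (fun p : ℝ × ℝ => f p.1 p.2)) :
    ContDiff ℝ (⊤ : ℕ∞) (fun p : ℝ × ℝ => deriv (fun x => f x p.2) p.1) := by
  have h : (fun p : ℝ × ℝ => deriv (fun x => f x p.2) p.1) =
      fun p => fderiv ℝ (fun p : ℝ × ℝ => f p.1 p.2) p (1, 0) := by
    funext p
    have hd : HasFDerivAt (fun p : ℝ × ℝ => f p.1 p.2) _ (p.1, p.2) :=
      (hf.differentiable (by simp) p).hasFDerivAt
    have hl : HasDerivAt (fun x : ℝ => (x, p.2)) ((1 : ℝ), (0 : ℝ)) p.1 :=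
      (hasDerivAt_id p.1).prodMk (hasDerivAt_const p.1 p.2)
    exact (hd.comp_hasDerivAt p.1 hl).deriv
  rw [h]
  exact (hf.fderiv_right (m := (⊤ : ℕ∞)) (by simp)).clm_apply contDiff_const

/-- the substitution `ρ = √(m+ν)` transforms the Camassa–Holm equation
`m_t = −2mu_x − um_x − 2νu_x`, `m = u − u_{xx}`, into the associated system
`ρ_t = −(uρ)_x`. -/
theorem stmt_8 (ν : ℝ) (u : ℝ → ℝ → ℝ)
    (hu : ContDiff ℝ (⊤ : ℕ∞) (fun p : ℝ × ℝ => u p.1 p.2))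
    (m : ℝ → ℝ → ℝ)
    (hm : ∀ x t, m x t = u x t - deriv (fun x₂ => deriv (fun x₁ => u x₁ t) x₂) x)
    (hpos : ∀ x t, 0 < m x t + ν)
    (hCH : ∀ x t, deriv (fun t' => m x t') t =
      -2 * m x t * deriv (fun x' => u x' t) x - u x t * deriv (fun x' => m x' t) x
        - 2 * ν * deriv (fun x' => u x' t) x)
    (ρ : ℝ → ℝ → ℝ) (hρ : ∀ x t, ρ x t = Real.sqrt (m x t + ν)) :
    ∀ x t, deriv (fun t' => ρ x t') t = - deriv (fun x' => u x' t * ρ x' t) x := by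
  intro x t
  have hM : ContDiff ℝ (⊤ : ℕ∞) (fun p : ℝ × ℝ => m p.1 p.2) := by
    simp only [hm]
    exact hu.sub (contDiff_deriv_fst
      (f := fun x₂ t => deriv (fun x₁ => u x₁ t) x₂) (contDiff_deriv_fst hu))
  have hMd := hM.differentiable (by simp)
  have hUd := hu.differentiable (by simp)
  have hmt : DifferentiableAt ℝ (fun t' => m x t') t :=
    (hMd (x, t)).comp t (f := fun t' : ℝ => (x, t')) (by fun_prop)
  have hmx : DifferentiableAt ℝ (fun x' => m x' t) x :=
    (hMd (x, t)).comp x (f := fun x' : ℝ => (x', t)) (by fun_prop)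
  have hux : DifferentiableAt ℝ (fun x' => u x' t) x :=
    (hUd (x, t)).comp x (f := fun x' : ℝ => (x', t)) (by fun_prop)
  have hne : m x t + ν ≠ 0 := (hpos x t).ne'
  have hρt := (hmt.hasDerivAt.add_const ν).sqrt hne
  have hρx := hux.hasDerivAt.mul ((hmx.hasDerivAt.add_const ν).sqrt hne)
  simp only [hρ]
  rw [hρt.deriv]
  erw [hρx.deriv]
  rw [hCH x t]
  have hs : 0 < √(m x t + ν) := Real.sqrt_pos.2 (hpos x t)
  have hsq : √(m x t + ν) ^ 2 = m x t + ν := Real.sq_sqrt (hpos x t).le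
  field_simp
  rw [hsq]
  ring
end

section
/- Let u, ρ : ℝ² → ℝ be smooth with ρ > 0, satisfying the associated Camassa–Holm system ρ_t = −(uρ)_x and ρ² = u − u_{xx} + ν. Let y : ℝ² → ℝ be smooth with y_x = ρ and y_t = −uρ (the reciprocal transformation dy = ρ dx − uρ dt, dτ = dt). Suppose r, v : ℝ² → ℝ are smooth functions of the new variables (y, τ) such that ρ(x,t) = r(y(x,t), t) and u(x,t) = v(y(x,t), t) for all (x,t). Then at every point of the image: v = r² − ν − r_{yτ} + r_τ r_y / r, and (1/r)_τ = 2 r r_y − ( r (log r)_{yτ} )_y. -/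
/-!
Along the flow of `y`, the chain rule gives `∂_x = r ∂_y` and `∂_t = ∂_τ - v r ∂_y`.
The conservation law `ρ_t = -(uρ)_x` therefore becomes `r_τ = -r² v_y`
(`tau_deriv_eq`), i.e. `(1/r)_τ = v_y` and `u_x = r v_y = -r_τ / r`. Differentiating the
latter once more in `x` gives `u_xx = -r_{yτ} + r_τ r_y / r`, using the symmetry of second
derivatives, and the constraint `ρ² = u - u_xx + ν` is the first identity.

Since `(log r)_{yτ} = r_{yτ}/r - r_y r_τ / r²`, the first identity reads
`r (log r)_{yτ} = r² - ν - v`. For fixed `t` it holds on a neighbourhood of `y x t`, because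
`y_x = ρ > 0` makes `y(·, t)` an open map; differentiating it in `y` and using
`(1/r)_τ = v_y` gives the second identity.
-/

open Filter Topology

/-- Partial derivative of a curried function in its first argument. -/
noncomputable def partialFst (f : ℝ → ℝ → ℝ) (a t : ℝ) : ℝ := deriv (fun s => f s t) a

/-- Partial derivative of a curried function in its second argument. -/
noncomputable def partialSnd (f : ℝ → ℝ → ℝ) (a t : ℝ) : ℝ := deriv (fun s => f a s) t

/-- Joint smoothness of a curried function of two real variables. -/
def SmoothTwo (f : ℝ → ℝ → ℝ) : Prop :=
  ContDiff ℝ (⊤ : ℕ∞) (fun p : ℝ × ℝ => f p.1 p.2)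

namespace SmoothTwo

variable {f : ℝ → ℝ → ℝ}

theorem hasFDerivAt (hf : SmoothTwo f) (p : ℝ × ℝ) :
    HasFDerivAt (fun p : ℝ × ℝ => f p.1 p.2)
      (fderiv ℝ (fun p : ℝ × ℝ => f p.1 p.2) p) p :=
  (ContDiff.differentiable hf (by simp) p).hasFDerivAt

theorem hasDerivAt_comp_fderiv (hf : SmoothTwo f) {g h : ℝ → ℝ} {g' h' s : ℝ}
    (hg : HasDerivAt g g' s) (hh : HasDerivAt h h' s) :
    HasDerivAt (fun s => f (g s) (h s))
      (fderiv ℝ (fun p : ℝ × ℝ => f p.1 p.2) (g s, h s) (g', h')) s :=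
  HasFDerivAt.comp_hasDerivAt (f := fun s => (g s, h s)) s
    (hf.hasFDerivAt (g s, h s)) (hg.prodMk hh)

theorem partialFst_eq (hf : SmoothTwo f) (a t : ℝ) :
    partialFst f a t = fderiv ℝ (fun p : ℝ × ℝ => f p.1 p.2) (a, t) (1, 0) :=
  (hf.hasDerivAt_comp_fderiv (hasDerivAt_id a) (hasDerivAt_const a t)).deriv

theorem partialSnd_eq (hf : SmoothTwo f) (a t : ℝ) :
    partialSnd f a t = fderiv ℝ (fun p : ℝ × ℝ => f p.1 p.2) (a, t) (0, 1) :=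
  (hf.hasDerivAt_comp_fderiv (hasDerivAt_const t a) (hasDerivAt_id t)).deriv

theorem hasDerivAt_comp (hf : SmoothTwo f) {g h : ℝ → ℝ} {g' h' s : ℝ}
    (hg : HasDerivAt g g' s) (hh : HasDerivAt h h' s) :
    HasDerivAt (fun s => f (g s) (h s))
      (g' * partialFst f (g s) (h s) + h' * partialSnd f (g s) (h s)) s := by
  convert hf.hasDerivAt_comp_fderiv hg hh using 1
  rw [hf.partialFst_eq, hf.partialSnd_eq, ← smul_eq_mul, ← smul_eq_mul,
    ← map_smul, ← map_smul, ← map_add]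
  simp

theorem hasDerivAt_fst (hf : SmoothTwo f) (a t : ℝ) :
    HasDerivAt (fun a' => f a' t) (partialFst f a t) a := by
  simpa using hf.hasDerivAt_comp (hasDerivAt_id a) (hasDerivAt_const a t)

theorem hasDerivAt_snd (hf : SmoothTwo f) (a t : ℝ) :
    HasDerivAt (fun t' => f a t') (partialSnd f a t) t := by
  simpa using hf.hasDerivAt_comp (hasDerivAt_const t a) (hasDerivAt_id t)

theorem contDiff_fderiv (hf : SmoothTwo f) :
    ContDiff ℝ (⊤ : ℕ∞) (fderiv ℝ (fun p : ℝ × ℝ => f p.1 p.2)) :=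
  ContDiff.fderiv_right hf (by simp)

theorem partialFst (hf : SmoothTwo f) : SmoothTwo (partialFst f) := by
  have h : (fun p : ℝ × ℝ => _root_.partialFst f p.1 p.2)
      = fun p => fderiv ℝ (fun p : ℝ × ℝ => f p.1 p.2) p (1, 0) :=
    funext fun p => hf.partialFst_eq p.1 p.2
  unfold SmoothTwo
  rw [h]
  exact hf.contDiff_fderiv.clm_apply contDiff_const

theorem partialSnd (hf : SmoothTwo f) : SmoothTwo (partialSnd f) := by
  have h : (fun p : ℝ × ℝ => _root_.partialSnd f p.1 p.2)
      = fun p => fderiv ℝ (fun p : ℝ × ℝ => f p.1 p.2) p (0, 1) :=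
    funext fun p => hf.partialSnd_eq p.1 p.2
  unfold SmoothTwo
  rw [h]
  exact hf.contDiff_fderiv.clm_apply contDiff_const

theorem hasDerivAt_clm_comp {G : ℝ × ℝ → ℝ × ℝ →L[ℝ] ℝ}
    {G' : ℝ × ℝ →L[ℝ] ℝ × ℝ →L[ℝ] ℝ} {g : ℝ → ℝ × ℝ} {g' : ℝ × ℝ} {s : ℝ}
    (hG : HasFDerivAt G G' (g s)) (hg : HasDerivAt g g' s) (w : ℝ × ℝ) :
    HasDerivAt (fun s => G (g s) w) (G' g' w) s :=
  (ContinuousLinearMap.apply ℝ ℝ w).hasFDerivAt.comp_hasDerivAt s (hG.comp_hasDerivAt s hg)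

theorem partial_comm (hf : SmoothTwo f) (a t : ℝ) :
    _root_.partialFst (_root_.partialSnd f) a t
      = _root_.partialSnd (_root_.partialFst f) a t := by
  have hd := (hf.contDiff_fderiv.differentiable (by simp) (a, t)).hasFDerivAt
  have h1 : HasDerivAt (fun a' => _root_.partialSnd f a' t)
      (fderiv ℝ (fderiv ℝ (fun p : ℝ × ℝ => f p.1 p.2)) (a, t) (1, 0) (0, 1)) a := by
    simp only [hf.partialSnd_eq]
    exact hasDerivAt_clm_comp (g := fun a' => (a', t)) hd
      ((hasDerivAt_id a).prodMk (hasDerivAt_const a t)) (0, 1)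
  have h2 : HasDerivAt (fun t' => _root_.partialFst f a t')
      (fderiv ℝ (fderiv ℝ (fun p : ℝ × ℝ => f p.1 p.2)) (a, t) (0, 1) (1, 0)) t := by
    simp only [hf.partialFst_eq]
    exact hasDerivAt_clm_comp (g := fun t' => (a, t')) hd
      ((hasDerivAt_const t a).prodMk (hasDerivAt_id t)) (1, 0)
  have hsymm := second_derivative_symmetric (fun p => hf.hasFDerivAt p) hd (1, 0) (0, 1)
  exact h1.deriv.trans (hsymm.trans h2.deriv.symm)

/-- Mixed logarithmic derivative at a point of positivity. -/
theorem deriv_deriv_log (hf : SmoothTwo f) {a t : ℝ} (hpos : 0 < f a t) :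
    deriv (fun τ => deriv (fun a' => Real.log (f a' τ)) a) t
      = _root_.partialSnd (_root_.partialFst f) a t / f a t
        - _root_.partialFst f a t * _root_.partialSnd f a t / f a t ^ 2 := by
  have hev : ∀ᶠ τ in 𝓝 t, 0 < f a τ :=
    (hf.hasDerivAt_snd a t).continuousAt.eventually (lt_mem_nhds hpos)
  have heq : (fun τ => deriv (fun a' => Real.log (f a' τ)) a)
      =ᶠ[𝓝 t] fun τ => _root_.partialFst f a τ / f a τ := by
    filter_upwards [hev] with τ hτ
    exact ((hf.hasDerivAt_fst a τ).log hτ.ne').deriv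
  rw [heq.deriv_eq,
    ((hf.partialFst.hasDerivAt_snd a t).fun_div (hf.hasDerivAt_snd a t) hpos.ne').deriv]
  have := hpos.ne'
  field_simp

end SmoothTwo

/-- The conservation law `ρ_t = -(uρ)_x` in the new variables: `r_τ = -r² v_y`. -/
theorem tau_deriv_eq {u ρ y r v : ℝ → ℝ → ℝ}
    (hy : SmoothTwo y) (hr : SmoothTwo r) (hv : SmoothTwo v)
    (hsys1 : ∀ x t, deriv (fun t' => ρ x t') t = - deriv (fun x' => u x' t * ρ x' t) x)
    (hyx : ∀ x t, partialFst y x t = ρ x t)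
    (hyt : ∀ x t, partialSnd y x t = - (u x t * ρ x t))
    (hrρ : ∀ x t, ρ x t = r (y x t) t)
    (hvu : ∀ x t, u x t = v (y x t) t) (x t : ℝ) :
    partialSnd r (y x t) t = - (r (y x t) t ^ 2 * partialFst v (y x t) t) := by
  have hX := hy.hasDerivAt_fst x t
  have h1 := (hr.hasDerivAt_comp (hy.hasDerivAt_snd x t) (hasDerivAt_id t)).deriv
  have h2 := ((hv.hasDerivAt_comp hX (hasDerivAt_const x t)).fun_mul
    (hr.hasDerivAt_comp hX (hasDerivAt_const x t))).deriv
  have h3 := hsys1 x t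
  simp only [hrρ, hvu] at h3
  simp only [id] at h1
  rw [h1, h2, hyx, hyt, hrρ, hvu] at h3
  linear_combination h3

/-- The constraint `ρ² = u - u_xx + ν` in the new variables. -/
theorem v_eq {ν : ℝ} {u ρ y r v : ℝ → ℝ → ℝ}
    (hy : SmoothTwo y) (hr : SmoothTwo r) (hv : SmoothTwo v)
    (hρpos : ∀ x t, 0 < ρ x t)
    (hsys1 : ∀ x t, deriv (fun t' => ρ x t') t = - deriv (fun x' => u x' t * ρ x' t) x)
    (hsys2 : ∀ x t, (ρ x t) ^ 2
      = u x t - deriv (fun x₂ => deriv (fun x₁ => u x₁ t) x₂) x + ν)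
    (hyx : ∀ x t, partialFst y x t = ρ x t)
    (hyt : ∀ x t, partialSnd y x t = - (u x t * ρ x t))
    (hrρ : ∀ x t, ρ x t = r (y x t) t)
    (hvu : ∀ x t, u x t = v (y x t) t) (x t : ℝ) :
    v (y x t) t = r (y x t) t ^ 2 - ν - partialSnd (partialFst r) (y x t) t
      + partialSnd r (y x t) t * partialFst r (y x t) t / r (y x t) t := by
  have hpos : ∀ x, r (y x t) t ≠ 0 := fun x => hrρ x t ▸ (hρpos x t).ne'
  have hux : (fun x₂ => deriv (fun x₁ => u x₁ t) x₂)
      = fun x₂ => - (partialSnd r (y x₂ t) t / r (y x₂ t) t) := by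
    funext x₂
    simp only [hvu]
    rw [(hv.hasDerivAt_comp (hy.hasDerivAt_fst x₂ t) (hasDerivAt_const x₂ t)).deriv, hyx, hrρ,
      tau_deriv_eq hy hr hv hsys1 hyx hyt hrρ hvu]
    have := hpos x₂
    field_simp
    ring
  have hX := hy.hasDerivAt_fst x t
  have hd := ((hr.partialSnd.hasDerivAt_comp hX (hasDerivAt_const x t)).fun_div
    (hr.hasDerivAt_comp hX (hasDerivAt_const x t)) (hpos x)).fun_neg.deriv
  have h := hsys2 x t
  rw [hux, hd, hr.partial_comm, hyx, hrρ, hvu] at h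
  have := hpos x
  field_simp at h ⊢
  refine mul_left_cancel₀ this ?_
  linear_combination -h

/-- the reciprocal transformation `dy = ρdx − uρdt`, `dτ = dt` maps the
associated Camassa–Holm system `ρ_t = −(uρ)_x`, `ρ² = u − u_{xx} + ν` to the system
`u = ρ² − ν − ρ_{yτ} + ρ_τρ_y/ρ`, `(1/ρ)_τ = 2ρρ_y − (ρ(log ρ)_{yτ})_y` in the new
variables. Here `r, v` denote `ρ, u` expressed as functions of `(y, τ)`. -/
theorem stmt_9 (ν : ℝ) (u ρ y r v : ℝ → ℝ → ℝ)
    (hu : ContDiff ℝ (⊤ : ℕ∞) (fun p : ℝ × ℝ => u p.1 p.2))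
    (hρ : ContDiff ℝ (⊤ : ℕ∞) (fun p : ℝ × ℝ => ρ p.1 p.2))
    (hy : ContDiff ℝ (⊤ : ℕ∞) (fun p : ℝ × ℝ => y p.1 p.2))
    (hr : ContDiff ℝ (⊤ : ℕ∞) (fun p : ℝ × ℝ => r p.1 p.2))
    (hv : ContDiff ℝ (⊤ : ℕ∞) (fun p : ℝ × ℝ => v p.1 p.2))
    (hρpos : ∀ x t, 0 < ρ x t)
    (hsys1 : ∀ x t, deriv (fun t' => ρ x t') t = - deriv (fun x' => u x' t * ρ x' t) x)
    (hsys2 : ∀ x t, (ρ x t) ^ 2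
      = u x t - deriv (fun x₂ => deriv (fun x₁ => u x₁ t) x₂) x + ν)
    (hyx : ∀ x t, deriv (fun x' => y x' t) x = ρ x t)
    (hyt : ∀ x t, deriv (fun t' => y x t') t = - (u x t * ρ x t))
    (hrρ : ∀ x t, ρ x t = r (y x t) t)
    (hvu : ∀ x t, u x t = v (y x t) t) :
    ∀ x t,
      (v (y x t) t =
        (r (y x t) t) ^ 2 - ν
          - deriv (fun τ => deriv (fun a => r a τ) (y x t)) t
          + deriv (fun τ => r (y x t) τ) t * deriv (fun a => r a t) (y x t) / r (y x t) t)
      ∧ (deriv (fun τ => 1 / r (y x t) τ) t =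
          2 * r (y x t) t * deriv (fun a => r a t) (y x t)
            - deriv (fun a => r a t *
                deriv (fun τ => deriv (fun a' => Real.log (r a' τ)) a) t) (y x t)) := by
  intro x t
  have hy' : SmoothTwo y := hy
  have hr' : SmoothTwo r := hr
  have hv' : SmoothTwo v := hv
  have hpos : ∀ x t, 0 < r (y x t) t := fun x t => hrρ x t ▸ hρpos x t
  have hv_eq := v_eq hy' hr' hv' hρpos hsys1 hsys2 hyx hyt hrρ hvu
  refine ⟨hv_eq x t, ?_⟩
  -- `y(·, t)` has nonvanishing derivative, so its values fill a neighbourhood of `y x t`.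
  have hnhds : ∀ᶠ a in 𝓝 (y x t), ∃ x', y x' t = a := by
    have hcd : ContDiff ℝ (⊤ : ℕ∞) (fun x' => y x' t) :=
      hy.comp (contDiff_id.prodMk contDiff_const)
    have hs : HasStrictDerivAt (fun x' => y x' t) (ρ x t) x := by
      have := hcd.contDiffAt.hasStrictDerivAt (x := x) (by simp)
      rwa [hyx] at this
    rw [← hs.map_nhds_eq (hρpos x t).ne', eventually_map]
    exact Eventually.of_forall fun x' => ⟨x', rfl⟩
  have heq : (fun a => r a t *
        deriv (fun τ => deriv (fun a' => Real.log (r a' τ)) a) t)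
      =ᶠ[𝓝 (y x t)] fun a => r a t ^ 2 - ν - v a t := by
    filter_upwards [hnhds] with a ha
    obtain ⟨x', rfl⟩ := ha
    rw [hr'.deriv_deriv_log (hpos x' t), hv_eq x' t]
    have := (hpos x' t).ne'
    field_simp
    ring
  have hrfst := hr'.hasDerivAt_fst (y x t) t
  rw [heq.deriv_eq,
    (((hrfst.fun_pow 2).sub_const ν).fun_sub (hv'.hasDerivAt_fst (y x t) t)).deriv,
    ((hasDerivAt_const t (1 : ℝ)).fun_div (hr'.hasDerivAt_snd (y x t) t) (hpos x t).ne').deriv,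
    hrfst.deriv, tau_deriv_eq hy' hr' hv' hsys1 hyx hyt hrρ hvu]
  have := (hpos x t).ne'
  push_cast
  field_simp
  ring
end

section
/- Let ρ : ℝ² → ℝ be smooth with ρ > 0 (variables (y, τ)), and define U = (ρ_y² − 2ρρ_{yy} − 1)/(2ρ²). Then the identity ρ_{yyy} + 2Uρ_y + U_y ρ = 0 holds everywhere. Consequently, if in addition U_τ = −2ρ_y (equivalently, ((ρ_y² − 2ρρ_{yy} − 1)/(4ρ²))_τ = −ρ_y), then U_{τyy} + 2U U_τ − 2ρ U_y = 0; that is, U solves the first negative flow of the KdV hierarchy (∂_y² + 2U + U_y ∂_y^{-1}) U_τ = 0 with ∂_y^{-1} U_τ = −2ρ. -/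
/-!
Differentiating the quotient defining `U` in `y` at fixed `τ` gives the identity
`ρ_{yyy} + 2Uρ_y + U_yρ = 0` (`slice_identity`). If `U_τ = -2ρ_y`, then `U_{τyy} = -2ρ_{yyy}`,
and the negative KdV flow equation is `-2` times that identity.
-/

/-- The one-variable core, at fixed `τ`. Let `r` have successive derivatives `r₁, r₂, r₃` and put
`u = (r₁² - 2 r r₂ - 1) / (2 r²)`. The numerator of `u` has derivative `-2 r r₃`, since the terms
`2 r₁ r₂` cancel, so the quotient rule gives `r u_y = -r₃ - 2 u r₁`. -/
lemma slice_identity (r : ℝ → ℝ) (hr : ContDiff ℝ (⊤ : ℕ∞) r) (y : ℝ) (h0 : r y ≠ 0) :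
    deriv (deriv (deriv r)) y
      + 2 * (((deriv r y) ^ 2 - 2 * r y * deriv (deriv r) y - 1) / (2 * (r y) ^ 2)) * deriv r y
      + deriv (fun a => ((deriv r a) ^ 2 - 2 * r a * deriv (deriv r) a - 1) / (2 * (r a) ^ 2)) y
        * r y = 0 := by
  have hr1 : ContDiff ℝ (⊤ : ℕ∞) (deriv r) := (contDiff_infty_iff_deriv.1 hr).2
  have hr2 : ContDiff ℝ (⊤ : ℕ∞) (deriv (deriv r)) := (contDiff_infty_iff_deriv.1 hr1).2
  have d0 : HasDerivAt r (deriv r y) y := (contDiff_infty_iff_deriv.1 hr).1 y |>.hasDerivAt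
  have d1 : HasDerivAt (deriv r) (deriv (deriv r) y) y :=
    (contDiff_infty_iff_deriv.1 hr1).1 y |>.hasDerivAt
  have d2 : HasDerivAt (deriv (deriv r)) (deriv (deriv (deriv r)) y) y :=
    (contDiff_infty_iff_deriv.1 hr2).1 y |>.hasDerivAt
  have hd : HasDerivAt
      (fun a => ((deriv r a) ^ 2 - 2 * r a * deriv (deriv r) a - 1) / (2 * (r a) ^ 2)) _ y :=
    (((d1.pow 2).sub ((d0.const_mul 2).mul d2)).sub_const 1).div ((d0.pow 2).const_mul 2)
      (mul_ne_zero two_ne_zero (pow_ne_zero 2 h0))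
  rw [hd.deriv]
  simp only [Pi.pow_apply, Pi.sub_apply, Pi.mul_apply]
  field_simp
  push_cast
  ring

/-- for smooth positive `ρ(y,τ)` and `U = (ρ_y² − 2ρρ_{yy} − 1)/(2ρ²)`, the
identity `ρ_{yyy} + 2Uρ_y + U_yρ = 0` holds; consequently, if `U_τ = −2ρ_y` then
`U_{τyy} + 2UU_τ − 2ρU_y = 0`, i.e. `U` solves the first negative KdV flow
`(∂_y² + 2U + U_y∂_y⁻¹)U_τ = 0` with `∂_y⁻¹U_τ = −2ρ`. -/
theorem stmt_10 (ρ : ℝ → ℝ → ℝ)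
    (hρ : ContDiff ℝ (⊤ : ℕ∞) (fun p : ℝ × ℝ => ρ p.1 p.2))
    (hpos : ∀ y τ, 0 < ρ y τ)
    (U : ℝ → ℝ → ℝ)
    (hU : ∀ y τ, U y τ =
      ((deriv (fun a => ρ a τ) y) ^ 2
          - 2 * ρ y τ * deriv (fun b => deriv (fun a => ρ a τ) b) y - 1)
        / (2 * (ρ y τ) ^ 2)) :
    (∀ y τ,
      deriv (fun c => deriv (fun b => deriv (fun a => ρ a τ) b) c) y
        + 2 * U y τ * deriv (fun a => ρ a τ) y
        + deriv (fun a => U a τ) y * ρ y τ = 0)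
    ∧ ((∀ y τ, deriv (fun s => U y s) τ = -2 * deriv (fun a => ρ a τ) y) →
        ∀ y τ,
          deriv (fun b => deriv (fun a => deriv (fun s => U a s) τ) b) y
            + 2 * U y τ * deriv (fun s => U y s) τ
            - 2 * ρ y τ * deriv (fun a => U a τ) y = 0) := by
  have key : ∀ y τ,
      deriv (fun c => deriv (fun b => deriv (fun a => ρ a τ) b) c) y
        + 2 * U y τ * deriv (fun a => ρ a τ) y
        + deriv (fun a => U a τ) y * ρ y τ = 0 := by
    intro y τ
    have hslice : ContDiff ℝ (⊤ : ℕ∞) (fun a => ρ a τ) :=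
      hρ.comp (contDiff_id.prodMk contDiff_const)
    have hUslice : (fun a => U a τ) = fun a =>
        ((deriv (fun a => ρ a τ) a) ^ 2
          - 2 * ρ a τ * deriv (deriv (fun a => ρ a τ)) a - 1) / (2 * (ρ a τ) ^ 2) :=
      funext fun a => hU a τ
    rw [hUslice, hU y τ]
    exact slice_identity (fun a => ρ a τ) hslice y (hpos y τ).ne'
  refine ⟨key, fun h y τ => ?_⟩
  have hτ : (fun a => deriv (fun s => U a s) τ) = fun a => -2 * deriv (fun b => ρ b τ) a :=
    funext fun a => h a τ
  -- The left-hand side is `-2` times the left-hand side of the identity `key`.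
  have h3 : deriv (fun b => deriv (fun a => deriv (fun s => U a s) τ) b) y
      = -2 * deriv (fun c => deriv (fun b => deriv (fun a => ρ a τ) b) c) y := by
    simp only [hτ, deriv_const_mul_field]
  rw [h3, h y τ]
  linear_combination -2 * key y τ
end

section
/- Fix 0 < β³ < β² < β¹ and let Q(λ) = (β¹−λ)(λ−β²)(λ−β³), which is positive on (β², β¹). Set 𝒥₀(β) = 2∫_{β²}^{β¹} Q(λ)^{−1/2} dλ, 𝒥₁(β) = 2∫_{β²}^{β¹} λ Q(λ)^{−1/2} dλ, and α₁ = −𝒥₁/𝒥₀. Then 𝒥₀, as a function of (β¹, β², β³) on the domain {0 < β³ < β² < β¹}, is differentiable and for each i = 1, 2, 3: ∂𝒥₀/∂β^i = −(𝒥₀/2) (β^i + α₁) / ∏_{j≠i}(β^i − β^j). (This is the variational formula for the a-period of the holomorphic differential; equivalently, ∫ over the a-cycle of dλ/((λ−β^i)w) equals −𝒥₀(β^i+α₁)/∏_{j≠i}(β^i−β^j).) -/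
/-!
The substitution `l = b1 sin² θ + b2 cos² θ` turns the improper integrals over `[b2, b1]` into
integrals over `[0, π/2]` of functions that are smooth up to the endpoints: with
`g θ = b1 sin² θ + b2 cos² θ - b3` (`= l - b3`) one has `dl / √Q = 2 dθ / √g`
(`integral_div_sqrt_cubic`), so `𝒥₀ = 4 ∫ g^(-1/2)` and `𝒥₁ = 4 ∫ (g + b3) g^(-1/2)`.
Since `g` is linear in the branch points and bounded below near a given triple, `𝒥₀` can be
differentiated under the integral sign (`hasFDerivAt_integral_inv_sqrt_radicand`).

The partial derivatives are combinations of `∫ g^(-1/2)` and `∫ g^(-3/2)`. Integrating the exact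
derivative of `sin θ cos θ / √g`, which vanishes at both endpoints, gives
`(b1 - b3) (b2 - b3) ∫ g^(-3/2) = ∫ g^(1/2)` (`integral_inv_mul_sqrt_radicand`), and this expresses
everything through `𝒥₀` and `𝒥₁`.
-/

open Real Set Filter Topology MeasureTheory

/-- `l - b3` in the angular variable `θ`, where `l = b1 sin² θ + b2 cos² θ` and
`p = (b1, b2, b3)`. -/
noncomputable def radicand (p : ℝ × ℝ × ℝ) (θ : ℝ) : ℝ :=
  p.1 * sin θ ^ 2 + p.2.1 * cos θ ^ 2 - p.2.2

/-- `radicand` as a linear form in the branch points. -/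
noncomputable def radicandCLM (θ : ℝ) : ℝ × ℝ × ℝ →L[ℝ] ℝ :=
  sin θ ^ 2 • ContinuousLinearMap.fst ℝ ℝ (ℝ × ℝ)
    + cos θ ^ 2 • (ContinuousLinearMap.fst ℝ ℝ ℝ ∘L ContinuousLinearMap.snd ℝ ℝ (ℝ × ℝ))
    - ContinuousLinearMap.snd ℝ ℝ ℝ ∘L ContinuousLinearMap.snd ℝ ℝ (ℝ × ℝ)

lemma radicandCLM_apply (θ : ℝ) (p : ℝ × ℝ × ℝ) : radicandCLM θ p = radicand p θ := by
  simp [radicandCLM, radicand]; ring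

lemma continuous_radicandCLM : Continuous radicandCLM := by
  unfold radicandCLM; fun_prop

lemma continuous_radicand (p : ℝ × ℝ × ℝ) : Continuous (radicand p) := by
  unfold radicand; fun_prop

lemma lt_radicand {p : ℝ × ℝ × ℝ} {m : ℝ} (h1 : m < p.1 - p.2.2) (h2 : m < p.2.1 - p.2.2)
    (θ : ℝ) : m < radicand p θ := by
  have hs := sin_sq_add_cos_sq θ
  have e : radicand p θ - m
      = (p.1 - p.2.2 - m) * sin θ ^ 2 + (p.2.1 - p.2.2 - m) * cos θ ^ 2 := by
    unfold radicand; linear_combination (p.2.2 + m) * hs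
  have : 0 < (p.1 - p.2.2 - m) * sin θ ^ 2 + (p.2.1 - p.2.2 - m) * cos θ ^ 2 := by
    rcases (sq_nonneg (sin θ)).eq_or_lt with h | h
    · have : cos θ ^ 2 = 1 := by linarith
      rw [← h, this]; linarith
    · have := mul_pos (sub_pos.2 h1) h
      have := mul_nonneg (sub_pos.2 h2).le (sq_nonneg (cos θ))
      linarith
  linarith

/-- The substitution `l = b1 sin² θ + b2 cos² θ`, which removes the endpoint singularities. No
integrability is needed, the map being monotone on `[0, π/2]`. -/
lemma integral_div_sqrt_cubic {b1 b2 b3 : ℝ} (h32 : b3 < b2) (h21 : b2 < b1) (f : ℝ → ℝ) :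
    ∫ l in b2..b1, f l / √((b1 - l) * (l - b2) * (l - b3))
      = ∫ θ in (0 : ℝ)..(π / 2),
          2 * (f (b1 * sin θ ^ 2 + b2 * cos θ ^ 2) / √(radicand (b1, b2, b3) θ)) := by
  have hpi : (0 : ℝ) ≤ π / 2 := by positivity
  have hderiv : ∀ θ, HasDerivAt (fun θ => b1 * sin θ ^ 2 + b2 * cos θ ^ 2)
      (2 * (b1 - b2) * (sin θ * cos θ)) θ := by
    intro θ
    have := (((hasDerivAt_sin θ).pow 2).const_mul b1).add
      (((hasDerivAt_cos θ).pow 2).const_mul b2)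
    refine this.congr_deriv ?_
    simp; ring
  have key := integral_Icc_deriv_smul_of_deriv_nonneg (a := 0) (b := π / 2)
    (f := fun θ => b1 * sin θ ^ 2 + b2 * cos θ ^ 2)
    (f' := fun θ => 2 * (b1 - b2) * (sin θ * cos θ))
    (g := fun l => f l / √((b1 - l) * (l - b2) * (l - b3)))
    (by fun_prop) (fun θ _ => hderiv θ) (by
      intro θ hθ
      have := sin_nonneg_of_nonneg_of_le_pi hθ.1.le (by linarith [hθ.2, pi_pos])
      have := cos_nonneg_of_mem_Icc ⟨by linarith [hθ.1, pi_pos], hθ.2.le⟩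
      have := sub_pos.2 h21
      positivity) hpi
  simp only [sin_zero, cos_zero, sin_pi_div_two, cos_pi_div_two] at key
  norm_num at key
  rw [intervalIntegral.integral_of_le h21.le, intervalIntegral.integral_of_le hpi,
    ← integral_Icc_eq_integral_Ioc, ← key, integral_Icc_eq_integral_Ioo,
    integral_Ioc_eq_integral_Ioo]
  refine setIntegral_congr_fun measurableSet_Ioo fun θ hθ => ?_
  have hs : 0 < sin θ := sin_pos_of_pos_of_lt_pi hθ.1 (by linarith [hθ.2, pi_pos])
  have hc : 0 < cos θ := cos_pos_of_mem_Ioo ⟨by linarith [hθ.1, pi_pos], hθ.2⟩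
  have hb := sub_pos.2 h21
  have e : (b1 - (b1 * sin θ ^ 2 + b2 * cos θ ^ 2)) * (b1 * sin θ ^ 2 + b2 * cos θ ^ 2 - b2)
      * (b1 * sin θ ^ 2 + b2 * cos θ ^ 2 - b3)
      = ((b1 - b2) * (sin θ * cos θ)) ^ 2 * radicand (b1, b2, b3) θ := by
    have e1 : cos θ ^ 2 = 1 - sin θ ^ 2 := by linarith [sin_sq_add_cos_sq θ]
    simp only [radicand, mul_pow, e1]; ring
  have hg : 0 < radicand (b1, b2, b3) θ := lt_radicand (by simp; linarith) (by simp; linarith) θ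
  have hg' := sqrt_pos.2 hg
  rw [e, sqrt_mul (sq_nonneg _), sqrt_sq (by positivity)]
  field_simp

lemma hasFDerivAt_integral_inv_sqrt_radicand {p : ℝ × ℝ × ℝ} (h32 : p.2.2 < p.2.1)
    (h21 : p.2.1 < p.1) :
    HasFDerivAt (fun q => ∫ θ in (0 : ℝ)..(π / 2), 1 / √(radicand q θ))
      (∫ θ in (0 : ℝ)..(π / 2),
        (-(1 / 2) * (1 / (radicand p θ * √(radicand p θ)))) • radicandCLM θ) p := by
  set m := (p.2.1 - p.2.2) / 2 with hm
  have hm0 : 0 < m := by rw [hm]; linarith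
  set s : Set (ℝ × ℝ × ℝ) := {q | m < q.1 - q.2.2 ∧ m < q.2.1 - q.2.2} with hs
  have hso : IsOpen s := by
    have o1 : IsOpen {q : ℝ × ℝ × ℝ | m < q.1 - q.2.2} := isOpen_lt (by fun_prop) (by fun_prop)
    have o2 : IsOpen {q : ℝ × ℝ × ℝ | m < q.2.1 - q.2.2} := isOpen_lt (by fun_prop) (by fun_prop)
    exact o1.inter o2
  have hps : p ∈ s := ⟨by rw [hm]; linarith, by rw [hm]; linarith⟩
  have hlt : ∀ q ∈ s, ∀ θ, m < radicand q θ := fun q hq θ => lt_radicand hq.1 hq.2 θ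
  have hpos : ∀ q ∈ s, ∀ θ, 0 < radicand q θ := fun q hq θ => hm0.trans (hlt q hq θ)
  have hcont : ∀ q ∈ s, Continuous fun θ => 1 / √(radicand q θ) := fun q hq =>
    continuous_const.div (continuous_radicand q).sqrt fun θ => (sqrt_pos.2 (hpos q hq θ)).ne'
  have hcont' : Continuous fun θ =>
      (-(1 / 2) * (1 / (radicand p θ * √(radicand p θ)))) • radicandCLM θ :=
    (continuous_const.mul (continuous_const.div
      ((continuous_radicand p).mul (continuous_radicand p).sqrt) fun θ =>
        (mul_pos (hpos p hps θ) (sqrt_pos.2 (hpos p hps θ))).ne')).smul continuous_radicandCLM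
  refine intervalIntegral.hasFDerivAt_integral_of_dominated_of_fderiv_le
    (𝕜 := ℝ) (s := s) (bound := fun θ => 1 / 2 * (1 / (m * √m)) * ‖radicandCLM θ‖)
    (F' := fun q θ => (-(1 / 2) * (1 / (radicand q θ * √(radicand q θ)))) • radicandCLM θ)
    (hso.mem_nhds hps) ?_ ((hcont p hps).intervalIntegrable _ _) hcont'.aestronglyMeasurable
    ?_ ((continuous_const.mul continuous_radicandCLM.norm).intervalIntegrable _ _) ?_
  · filter_upwards [hso.mem_nhds hps] with q hq using (hcont q hq).aestronglyMeasurable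
  · refine Eventually.of_forall fun θ _ q hq => ?_
    have h0 := hpos q hq θ
    have h1 := sqrt_pos.2 h0
    have h2 := sqrt_pos.2 hm0
    have h3 := (hlt q hq θ).le
    rw [norm_smul, norm_mul, norm_neg, norm_of_nonneg (by norm_num : (0 : ℝ) ≤ 1 / 2),
      norm_of_nonneg (by positivity : 0 ≤ 1 / (radicand q θ * √(radicand q θ)))]
    gcongr
  · refine Eventually.of_forall fun θ _ q hq => ?_
    have h0 := hpos q hq θ
    have h1 := sqrt_pos.2 h0
    have hl : HasFDerivAt (fun q => radicand q θ) (radicandCLM θ) q := by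
      rw [show (fun q => radicand q θ) = radicandCLM θ from
        funext fun q => (radicandCLM_apply θ q).symm]
      exact (radicandCLM θ).hasFDerivAt
    have hd : HasDerivAt (fun x => 1 / √x)
        (-(1 / 2) * (1 / (radicand q θ * √(radicand q θ)))) (radicand q θ) := by
      have := ((hasDerivAt_id (radicand q θ)).sqrt h0.ne').inv h1.ne'
      simp only [one_div]
      refine this.congr_deriv ?_
      simp only [id]
      rw [sq_sqrt h0.le]
      field_simp
    exact HasDerivAt.comp_hasFDerivAt (h₂ := fun x => 1 / √x) q hd hl

/-- Obtained by integrating the exact derivative of `sin θ cos θ / √(radicand p θ)`. -/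
lemma integral_inv_mul_sqrt_radicand {p : ℝ × ℝ × ℝ} (h32 : p.2.2 < p.2.1)
    (h21 : p.2.1 < p.1) :
    (p.1 - p.2.2) * (p.2.1 - p.2.2) *
        ∫ θ in (0 : ℝ)..(π / 2), 1 / (radicand p θ * √(radicand p θ))
      = ∫ θ in (0 : ℝ)..(π / 2), √(radicand p θ) := by
  have hpos : ∀ θ, 0 < radicand p θ := lt_radicand (by linarith) (by linarith)
  have hc1 : Continuous fun θ => 1 / (radicand p θ * √(radicand p θ)) :=
    continuous_const.div ((continuous_radicand p).mul (continuous_radicand p).sqrt) fun θ =>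
      (mul_pos (hpos θ) (sqrt_pos.2 (hpos θ))).ne'
  have hc2 := (continuous_radicand p).sqrt
  have hd : ∀ θ, HasDerivAt (fun θ => (p.1 - p.2.1) * (sin θ * cos θ) / √(radicand p θ))
      ((p.1 - p.2.2) * (p.2.1 - p.2.2) * (1 / (radicand p θ * √(radicand p θ)))
        - √(radicand p θ)) θ := by
    intro θ
    have h0 := hpos θ
    have h1 := sqrt_pos.2 h0
    have hr : HasDerivAt (radicand p) (2 * (p.1 - p.2.1) * (sin θ * cos θ)) θ := by
      have := ((((hasDerivAt_sin θ).pow 2).const_mul p.1).add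
        (((hasDerivAt_cos θ).pow 2).const_mul p.2.1)).sub_const p.2.2
      refine this.congr_deriv ?_
      simp; ring
    have := (((hasDerivAt_sin θ).mul (hasDerivAt_cos θ)).const_mul (p.1 - p.2.1)).div
      (hr.sqrt h0.ne') h1.ne'
    refine this.congr_deriv ?_
    have e1 : cos θ ^ 2 = 1 - sin θ ^ 2 := by linarith [sin_sq_add_cos_sq θ]
    have e2 : radicand p θ = p.2.1 - p.2.2 + (p.1 - p.2.1) * sin θ ^ 2 := by
      simp only [radicand, e1]; ring
    have hsq := sq_sqrt h0.le
    generalize √(radicand p θ) = r at *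
    rw [← hsq] at e2 ⊢
    simp only [Pi.mul_apply]
    field_simp
    have e3 : r ^ 4 = (p.2.1 - p.2.2 + (p.1 - p.2.1) * sin θ ^ 2) ^ 2 := by rw [← e2]; ring
    simp only [e1, e2, e3]
    ring
  have hI := intervalIntegral.integral_eq_sub_of_hasDerivAt (a := 0) (b := π / 2)
    (fun θ _ => hd θ) (((continuous_const.mul hc1).sub hc2).intervalIntegrable _ _)
  rw [intervalIntegral.integral_sub ((hc1.intervalIntegrable _ _).const_mul _)
    (hc2.intervalIntegrable _ _), intervalIntegral.integral_const_mul] at hI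
  simp at hI
  simpa [sub_eq_zero] using hI

/-- variational formula for the a-period `𝒥₀` of the holomorphic
differential: on `{0 < β³ < β² < β¹}`, `𝒥₀` is differentiable in each branch point and
`∂𝒥₀/∂β^i = −(𝒥₀/2)(β^i + α₁)/∏_{j≠i}(β^i − β^j)`, where `α₁ = −𝒥₁/𝒥₀`. -/
theorem stmt_12
    (J0 J1 : ℝ → ℝ → ℝ → ℝ)
    (hJ0 : ∀ b1 b2 b3, J0 b1 b2 b3 =
      2 * ∫ l in b2..b1, 1 / Real.sqrt ((b1 - l) * (l - b2) * (l - b3)))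
    (hJ1 : ∀ b1 b2 b3, J1 b1 b2 b3 =
      2 * ∫ l in b2..b1, l / Real.sqrt ((b1 - l) * (l - b2) * (l - b3))) :
    ∀ b1 b2 b3 : ℝ, 0 < b3 → b3 < b2 → b2 < b1 →
      DifferentiableAt ℝ (fun p : ℝ × ℝ × ℝ => J0 p.1 p.2.1 p.2.2) (b1, b2, b3)
      ∧ HasDerivAt (fun x => J0 x b2 b3)
          (-(J0 b1 b2 b3 / 2) * (b1 + (-(J1 b1 b2 b3) / J0 b1 b2 b3))
            / ((b1 - b2) * (b1 - b3))) b1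
      ∧ HasDerivAt (fun x => J0 b1 x b3)
          (-(J0 b1 b2 b3 / 2) * (b2 + (-(J1 b1 b2 b3) / J0 b1 b2 b3))
            / ((b2 - b1) * (b2 - b3))) b2
      ∧ HasDerivAt (fun x => J0 b1 b2 x)
          (-(J0 b1 b2 b3 / 2) * (b3 + (-(J1 b1 b2 b3) / J0 b1 b2 b3))
            / ((b3 - b1) * (b3 - b2))) b3 := by
  intro b1 b2 b3 _ h32 h21
  have hpos : ∀ θ, 0 < radicand (b1, b2, b3) θ :=
    lt_radicand (by simp; linarith) (by simp; linarith)
  have hJ0' : ∀ q : ℝ × ℝ × ℝ, q.2.2 < q.2.1 → q.2.1 < q.1 → J0 q.1 q.2.1 q.2.2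
      = 4 * ∫ θ in (0 : ℝ)..(π / 2), 1 / √(radicand q θ) := by
    intro q hq1 hq2
    rw [hJ0, integral_div_sqrt_cubic hq1 hq2 (fun _ => 1), intervalIntegral.integral_const_mul]
    ring
  have hFD := (hasFDerivAt_integral_inv_sqrt_radicand (p := (b1, b2, b3)) h32 h21).const_mul 4
  have hibp := integral_inv_mul_sqrt_radicand (p := (b1, b2, b3)) h32 h21
  have hsqrt := (continuous_radicand (b1, b2, b3)).sqrt
  have hc0 : Continuous fun θ => 1 / √(radicand (b1, b2, b3) θ) :=
    continuous_const.div hsqrt fun θ => (sqrt_pos.2 (hpos θ)).ne'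
  have hc3 : Continuous fun θ =>
      1 / (radicand (b1, b2, b3) θ * √(radicand (b1, b2, b3) θ)) :=
    continuous_const.div ((continuous_radicand _).mul hsqrt) fun θ =>
      (mul_pos (hpos θ) (sqrt_pos.2 (hpos θ))).ne'
  have hD : Continuous fun θ => (-(1 / 2) * (1 / (radicand (b1, b2, b3) θ *
      √(radicand (b1, b2, b3) θ)))) • radicandCLM θ :=
    (continuous_const.mul hc3).smul continuous_radicandCLM
  have hJ0b := hJ0' (b1, b2, b3) h32 h21
  have hJ1b : J1 b1 b2 b3 = 4 * ((∫ θ in (0 : ℝ)..(π / 2), √(radicand (b1, b2, b3) θ))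
      + b3 * ∫ θ in (0 : ℝ)..(π / 2), 1 / √(radicand (b1, b2, b3) θ)) := by
    rw [hJ1, integral_div_sqrt_cubic h32 h21 (fun l => l), intervalIntegral.integral_const_mul,
      ← intervalIntegral.integral_const_mul b3, ← intervalIntegral.integral_add
        (hsqrt.intervalIntegrable _ _) ((hc0.intervalIntegrable _ _).const_mul _),
      ← mul_assoc]
    norm_num
    refine intervalIntegral.integral_congr fun θ _ => ?_
    have h1 := sqrt_pos.2 (hpos θ)
    have h2 := sq_sqrt (hpos θ).le
    field_simp
    rw [h2, radicand]
    ring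
  have hev : (fun q : ℝ × ℝ × ℝ => J0 q.1 q.2.1 q.2.2) =ᶠ[𝓝 (b1, b2, b3)]
      fun q => 4 * ∫ θ in (0 : ℝ)..(π / 2), 1 / √(radicand q θ) := by
    have o1 : IsOpen {q : ℝ × ℝ × ℝ | q.2.2 < q.2.1} := isOpen_lt (by fun_prop) (by fun_prop)
    have o2 : IsOpen {q : ℝ × ℝ × ℝ | q.2.1 < q.1} := isOpen_lt (by fun_prop) (by fun_prop)
    filter_upwards [o1.mem_nhds h32, o2.mem_nhds h21] with q hq1 hq2 using hJ0' q hq1 hq2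
  have hF := hFD.congr_of_eventuallyEq hev
  -- The derivative in direction `v`, when `radicand v = x + y * radicand (b1, b2, b3)`.
  have happly : ∀ (v : ℝ × ℝ × ℝ) (x y : ℝ),
      (∀ θ, radicand v θ = x + y * radicand (b1, b2, b3) θ) →
      ((4 : ℝ) • ∫ θ in (0 : ℝ)..(π / 2), (-(1 / 2) * (1 / (radicand (b1, b2, b3) θ *
        √(radicand (b1, b2, b3) θ)))) • radicandCLM θ) v
      = -2 * (x * (∫ θ in (0 : ℝ)..(π / 2),
          1 / (radicand (b1, b2, b3) θ * √(radicand (b1, b2, b3) θ)))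
        + y * ∫ θ in (0 : ℝ)..(π / 2), 1 / √(radicand (b1, b2, b3) θ)) := by
    intro v x y hv
    rw [smul_apply,
      ContinuousLinearMap.intervalIntegral_apply (hD.intervalIntegrable _ _),
      ← intervalIntegral.integral_const_mul x, ← intervalIntegral.integral_const_mul y,
      ← intervalIntegral.integral_add ((hc3.intervalIntegrable _ _).const_mul _)
        ((hc0.intervalIntegrable _ _).const_mul _), smul_eq_mul,
      ← intervalIntegral.integral_const_mul, ← intervalIntegral.integral_const_mul]
    refine intervalIntegral.integral_congr fun θ _ => ?_
    have h0 := hpos θ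
    have h1 := sqrt_pos.2 h0
    simp only [smul_apply, radicandCLM_apply, hv, smul_eq_mul]
    field_simp
    norm_num
  have hM0 : 0 < ∫ θ in (0 : ℝ)..(π / 2), 1 / √(radicand (b1, b2, b3) θ) :=
    intervalIntegral.intervalIntegral_pos_of_pos (hc0.intervalIntegrable _ _)
      (fun θ => by have := sqrt_pos.2 (hpos θ); positivity) (by positivity)
  have hA : b1 - b3 ≠ 0 := by linarith
  have hB : b2 - b3 ≠ 0 := by linarith
  have hC : b1 - b2 ≠ 0 := by linarith
  have hA' : b3 - b1 ≠ 0 := by linarith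
  have hB' : b3 - b2 ≠ 0 := by linarith
  have hC' : b2 - b1 ≠ 0 := by linarith
  simp only at hibp hJ0b
  rw [hJ0b, hJ1b, ← hibp]
  refine ⟨hF.differentiableAt, ?_, ?_, ?_⟩
  · have hcurve : HasDerivAt (fun x : ℝ => (x, b2, b3)) (1, 0, 0) b1 :=
      (hasDerivAt_id b1).prodMk (hasDerivAt_const b1 (b2, b3))
    refine (hF.comp_hasDerivAt b1 hcurve).congr_deriv ?_
    refine (happly (1, 0, 0) (-(b2 - b3) / (b1 - b2)) (1 / (b1 - b2)) fun θ => ?_).trans ?_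
    · have e1 : cos θ ^ 2 = 1 - sin θ ^ 2 := by linarith [sin_sq_add_cos_sq θ]
      simp only [radicand, e1]; field_simp; ring
    · field_simp; ring
  · have hcurve : HasDerivAt (fun x : ℝ => (b1, x, b3)) (0, 1, 0) b2 :=
      (hasDerivAt_const b2 b1).prodMk ((hasDerivAt_id b2).prodMk (hasDerivAt_const b2 b3))
    refine (hF.comp_hasDerivAt b2 hcurve).congr_deriv ?_
    refine (happly (0, 1, 0) (-(b1 - b3) / (b2 - b1)) (1 / (b2 - b1)) fun θ => ?_).trans ?_
    · have e1 : sin θ ^ 2 = 1 - cos θ ^ 2 := by linarith [sin_sq_add_cos_sq θ]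
      simp only [radicand, e1]; field_simp; ring
    · field_simp; ring
  · have hcurve : HasDerivAt (fun x : ℝ => (b1, b2, x)) (0, 0, 1) b3 :=
      (hasDerivAt_const b3 b1).prodMk ((hasDerivAt_const b3 b2).prodMk (hasDerivAt_id b3))
    refine (hF.comp_hasDerivAt b3 hcurve).congr_deriv ?_
    refine (happly (0, 0, 1) (-1) 0 fun θ => by simp [radicand]).trans ?_
    field_simp; ring
end

section
/- Fix 0 < β³ < β² < β¹, let Q(λ) = (β¹−λ)(λ−β²)(λ−β³), 𝒥₀ = 2∫_{β²}^{β¹} Q^{−1/2} dλ, 𝒥₁ = 2∫_{β²}^{β¹} λ Q^{−1/2} dλ, α₁ = −𝒥₁/𝒥₀. Define the averaged wave number 𝒦(β) = 2π/𝒥₀(β) and frequency Ω(β) = (4π/𝒥₀(β)) (β¹β²β³)^{−1/2}. Then for each i = 1, 2, 3 the partial derivatives ∂𝒦/∂β^i and ∂Ω/∂β^i exist, ∂𝒦/∂β^i ≠ 0, and the characteristic speeds of the one-phase Whitham equations of the first negative KdV flow are v^i(β) := (∂Ω/∂β^i)/(∂𝒦/∂β^i) = (2/√(β¹β²β³)) (1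 − ∏_{j≠i}(β^i − β^j) / (β^i (β^i + α₁))). -/
/-!
The substitution `l = lam b1 b2 t = b1 (1 - cos t)/2 + b2 (1 + cos t)/2`, `t ∈ (0, π)`, removes the
endpoint singularities: `(b1 - l)(l - b2) = ((b1 - b2)/2 · sin t)²` and `dl = (b1 - b2)/2 · sin t dt`,
so that `J0 = 2 ∫₀^π (lam - b3)^(-1/2) dt`, an integral of a smooth function on a fixed interval
(`integral_subst`). With `D = lam - b3`, `p = (1 - cos t)/2`, `q = (1 + cos t)/2`, differentiation
under the integral sign (`hasDerivAt_integral_sqrt`) gives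
`∂₁J0 = -∫ p D^(-3/2)`, `∂₂J0 = -∫ q D^(-3/2)`, `∂₃J0 = ∫ D^(-3/2)`.

Integrating the exact derivative of `sin t · D^(-1/2)` over `[0, π]` gives
`(b1 - b3) ∫ p D^(-3/2) = ∫ q D^(-1/2)` and `(b2 - b3) ∫ q D^(-3/2) = ∫ p D^(-1/2)`
(`exact_one`, `exact_two`). Since `J0 = 2 ∫ (p + q) D^(-1/2)` and
`J1 = 2 ∫ (b1 p + b2 q) D^(-1/2)`, these amount to
`2 ∏_{j≠i}(b_i - b_j) ∂_i J0 = J1 - b_i J0` for `i = 1, 2, 3`.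

Finally, `Ω = K C` with `C = 2 (b1 b2 b3)^(-1/2)` and `∂_i C = -C/(2 b_i)`, whence
`v_i = C + K ∂_i C / ∂_i K = C (1 + J0 / (2 b_i ∂_i J0))`, which is the claimed formula
(`speed_of_deriv`).
-/

open Set MeasureTheory Filter Topology

/-- The spectral variable running from `b2` (at `t = 0`) to `b1` (at `t = π`). -/
noncomputable def lam (b1 b2 t : ℝ) : ℝ :=
  b1 * ((1 - Real.cos t) / 2) + b2 * ((1 + Real.cos t) / 2)

lemma continuous_lam (b1 b2 : ℝ) : Continuous (lam b1 b2) := by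
  unfold lam; fun_prop

lemma le_lam {b1 b2 : ℝ} (h : b2 ≤ b1) (t : ℝ) : b2 ≤ lam b1 b2 t := by
  unfold lam
  nlinarith [Real.cos_le_one t]

lemma hasDerivAt_lam (b1 b2 t : ℝ) :
    HasDerivAt (lam b1 b2) ((b1 - b2) / 2 * Real.sin t) t := by
  have hc := Real.hasDerivAt_cos t
  have h := ((((hc.const_sub 1).div_const 2).const_mul b1)).add
    (((hc.const_add 1).div_const 2).const_mul b2)
  exact h.congr_deriv (by ring)

lemma lam_image {b1 b2 : ℝ} (h : b2 < b1) : lam b1 b2 '' Ioo 0 Real.pi = Ioo b2 b1 := by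
  have hr : (b1 - b2) ≠ 0 := (sub_pos.2 h).ne'
  ext l
  constructor
  · rintro ⟨t, ht, rfl⟩
    have hs := Real.sin_pos_of_mem_Ioo ht
    have h1 := Real.sin_sq_add_cos_sq t
    have hs2 : 0 < Real.sin t ^ 2 := by positivity
    have hc1 : Real.cos t < 1 := by nlinarith
    have hc2 : -1 < Real.cos t := by nlinarith
    unfold lam
    constructor <;> nlinarith
  · rintro ⟨h2, h1⟩
    have hu : -1 < (b1 + b2 - 2 * l) / (b1 - b2) := by
      rw [lt_div_iff₀ (sub_pos.2 h)]; linarith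
    have hv : (b1 + b2 - 2 * l) / (b1 - b2) < 1 := by
      rw [div_lt_iff₀ (sub_pos.2 h)]; linarith
    refine ⟨Real.arccos ((b1 + b2 - 2 * l) / (b1 - b2)), ⟨Real.arccos_pos.2 hv, ?_⟩, ?_⟩
    · refine lt_of_le_of_ne (Real.arccos_le_pi _) fun he => ?_
      rw [Real.arccos_eq_pi] at he
      linarith
    · unfold lam
      rw [Real.cos_arccos hu.le hv.le]
      field_simp
      ring

lemma lam_injOn {b1 b2 : ℝ} (h : b2 < b1) : InjOn (lam b1 b2) (Ioo 0 Real.pi) := by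
  intro s hs t ht he
  refine Real.injOn_cos (Ioo_subset_Icc_self hs) (Ioo_subset_Icc_self ht) ?_
  unfold lam at he
  have hr : (b1 - b2) ≠ 0 := (sub_pos.2 h).ne'
  refine mul_left_cancel₀ hr ?_
  linarith

/-- The change of variables `l = lam b1 b2 t`. No condition on `b3` is needed: `√` and division
take the same junk values on both sides. -/
lemma integral_subst (g : ℝ → ℝ) {b1 b2 : ℝ} (b3 : ℝ) (h : b2 < b1) :
    ∫ l in b2..b1, g l / Real.sqrt ((b1 - l) * (l - b2) * (l - b3)) =
      ∫ t in (0 : ℝ)..Real.pi, g (lam b1 b2 t) / Real.sqrt (lam b1 b2 t - b3) := by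
  rw [intervalIntegral.integral_of_le h.le, intervalIntegral.integral_of_le Real.pi_pos.le,
    integral_Ioc_eq_integral_Ioo, integral_Ioc_eq_integral_Ioo, ← lam_image h,
    integral_image_eq_integral_abs_deriv_smul measurableSet_Ioo
      (fun t _ => (hasDerivAt_lam b1 b2 t).hasDerivWithinAt) (lam_injOn h)]
  refine setIntegral_congr_fun measurableSet_Ioo fun t ht => ?_
  have hs := Real.sin_pos_of_mem_Ioo ht
  have hpos : 0 < (b1 - b2) / 2 * Real.sin t := mul_pos (by linarith) hs
  have hsq : (b1 - lam b1 b2 t) * (lam b1 b2 t - b2) * (lam b1 b2 t - b3) =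
      ((b1 - b2) / 2 * Real.sin t) ^ 2 * (lam b1 b2 t - b3) := by
    congr 1
    rw [mul_pow, Real.sin_sq]
    unfold lam
    ring
  simp only [smul_eq_mul]
  rw [hsq, Real.sqrt_mul (sq_nonneg _), Real.sqrt_sq hpos.le, abs_of_pos hpos,
    mul_div_assoc', mul_div_mul_left _ _ hpos.ne']

/-- Differentiation under the integral sign for an integrand `(u + x w)^(-1/2)` which is bounded
away from its singularity at the base point `x = x0`. -/
lemma hasDerivAt_integral_sqrt (u w : ℝ → ℝ) (hu : Continuous u) (hw : Continuous w)
    (hw1 : ∀ t, |w t| ≤ 1) {x0 m : ℝ} (hm : 0 < m) (hD : ∀ t, m ≤ u t + x0 * w t) :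
    HasDerivAt (fun x => ∫ t in (0 : ℝ)..Real.pi, 1 / Real.sqrt (u t + x * w t))
      (∫ t in (0 : ℝ)..Real.pi,
        -(w t / (2 * ((u t + x0 * w t) * Real.sqrt (u t + x0 * w t))))) x0 := by
  have hlow : ∀ t, ∀ x ∈ Metric.ball x0 (m / 2), m / 2 ≤ u t + x * w t := by
    intro t x hx
    rw [Metric.mem_ball, Real.dist_eq] at hx
    have h1 : |(x - x0) * w t| ≤ m / 2 := by
      rw [abs_mul]
      calc |x - x0| * |w t| ≤ m / 2 * 1 :=
            mul_le_mul hx.le (hw1 t) (abs_nonneg _) (by positivity)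
        _ = m / 2 := mul_one _
    have h2 := (abs_le.1 h1).1
    have h3 := hD t
    linarith
  have hself : x0 ∈ Metric.ball x0 (m / 2) := Metric.mem_ball_self (by positivity)
  have hpos : ∀ t, ∀ x ∈ Metric.ball x0 (m / 2), 0 < u t + x * w t := fun t x hx =>
    lt_of_lt_of_le (by positivity) (hlow t x hx)
  have hcont : ∀ x ∈ Metric.ball x0 (m / 2),
      Continuous fun t => 1 / Real.sqrt (u t + x * w t) := by
    intro x hx
    refine Continuous.div (by fun_prop) (by fun_prop) fun t => ?_
    exact (Real.sqrt_pos.2 (hpos t x hx)).ne'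
  refine (intervalIntegral.hasDerivAt_integral_of_dominated_loc_of_deriv_le
    (F := fun x t => 1 / Real.sqrt (u t + x * w t))
    (F' := fun x t => -(w t / (2 * ((u t + x * w t) * Real.sqrt (u t + x * w t)))))
    (bound := fun _ => 1 / (2 * ((m / 2) * Real.sqrt (m / 2))))
    (s := Metric.ball x0 (m / 2)) (Metric.ball_mem_nhds _ (by positivity))
    ?_ ?_ ?_ ?_ ?_ ?_).2
  · filter_upwards [Metric.ball_mem_nhds x0 (half_pos hm)] with x hx
    exact (hcont x hx).aestronglyMeasurable
  · exact (hcont x0 hself).intervalIntegrable _ _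
  · refine Continuous.aestronglyMeasurable ?_
    refine Continuous.neg (Continuous.div hw (by fun_prop) fun t => ?_)
    have := hpos t x0 hself
    have := Real.sqrt_pos.2 this
    positivity
  · refine Eventually.of_forall fun t _ x hx => ?_
    have h0 := hpos t x hx
    have h1 := hlow t x hx
    have h2 := Real.sqrt_pos.2 h0
    have h3 := Real.sqrt_le_sqrt h1
    have h4 : 0 < Real.sqrt (m / 2) := Real.sqrt_pos.2 (by positivity)
    rw [norm_neg, norm_div, Real.norm_eq_abs, Real.norm_eq_abs,
      abs_of_pos (show 0 < 2 * ((u t + x * w t) * Real.sqrt (u t + x * w t)) by positivity)]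
    gcongr
    exact hw1 t
  · exact intervalIntegrable_const
  · refine Eventually.of_forall fun t _ x hx => ?_
    have h0 := hpos t x hx
    have h2 := Real.sqrt_pos.2 h0
    have hl : HasDerivAt (fun x => u t + x * w t) (w t) x := by
      simpa using ((hasDerivAt_id x).mul_const (w t)).const_add (u t)
    have h := (hl.sqrt h0.ne').inv h2.ne'
    simp only [one_div]
    refine h.congr_deriv ?_
    have hs := Real.sq_sqrt h0.le
    rw [hs]
    field_simp

/-- The derivative of `sin t · D^(-1/2)`, written as `q D^(-1/2) - (b1 - b3) p D^(-3/2)` by means of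
`sin² t = 4 p q`, `cos t = q - p` and `D + q (b1 - b2) = b1 - b3`. -/
lemma hasDerivAt_sin_div {b1 b2 b3 : ℝ} (h32 : b3 < b2) (h21 : b2 < b1) (t : ℝ) :
    HasDerivAt (fun t => Real.sin t / Real.sqrt (lam b1 b2 t - b3))
      ((1 + Real.cos t) / 2 / Real.sqrt (lam b1 b2 t - b3) - (b1 - b3) *
        ((1 - Real.cos t) / 2 / ((lam b1 b2 t - b3) * Real.sqrt (lam b1 b2 t - b3)))) t := by
  have hD : 0 < lam b1 b2 t - b3 := by linarith [le_lam h21.le t]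
  have hs := Real.sqrt_pos.2 hD
  have h := (Real.hasDerivAt_sin t).div (((hasDerivAt_lam b1 b2 t).sub_const b3).sqrt hD.ne')
    hs.ne'
  refine h.congr_deriv ?_
  have hsq := Real.sq_sqrt hD.le
  rw [hsq]
  field_simp
  rw [hsq, Real.sin_sq]
  unfold lam
  ring

section Integrals

variable {b1 b2 b3 : ℝ}

lemma sqrt_D_pos (h32 : b3 < b2) (h21 : b2 < b1) (t : ℝ) :
    0 < Real.sqrt (lam b1 b2 t - b3) :=
  Real.sqrt_pos.2 (by linarith [le_lam h21.le t])

lemma continuous_div_sqrt (h32 : b3 < b2) (h21 : b2 < b1) {g : ℝ → ℝ} (hg : Continuous g) :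
    Continuous fun t => g t / Real.sqrt (lam b1 b2 t - b3) := by
  have := continuous_lam b1 b2
  exact hg.div (by fun_prop) fun t => (sqrt_D_pos h32 h21 t).ne'

lemma continuous_div_cube (h32 : b3 < b2) (h21 : b2 < b1) {g : ℝ → ℝ} (hg : Continuous g) :
    Continuous fun t => g t / ((lam b1 b2 t - b3) * Real.sqrt (lam b1 b2 t - b3)) := by
  have := continuous_lam b1 b2
  refine hg.div (by fun_prop) fun t => ?_
  have h1 := sqrt_D_pos h32 h21 t
  have h2 := Real.sqrt_pos.1 h1
  positivity

lemma exact_one (h32 : b3 < b2) (h21 : b2 < b1) :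
    (b1 - b3) * ∫ t in (0 : ℝ)..Real.pi, (1 - Real.cos t) / 2 /
        ((lam b1 b2 t - b3) * Real.sqrt (lam b1 b2 t - b3)) =
      ∫ t in (0 : ℝ)..Real.pi, (1 + Real.cos t) / 2 / Real.sqrt (lam b1 b2 t - b3) := by
  have c1 := continuous_div_sqrt h32 h21
    (g := fun t => (1 + Real.cos t) / 2) (by fun_prop)
  have c2 := (continuous_div_cube h32 h21
    (g := fun t => (1 - Real.cos t) / 2) (by fun_prop)).const_mul (b1 - b3)
  have h := intervalIntegral.integral_eq_sub_of_hasDerivAt (a := 0) (b := Real.pi)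
    (fun t _ => hasDerivAt_sin_div h32 h21 t) ((c1.sub c2).intervalIntegrable _ _)
  rw [intervalIntegral.integral_sub (c1.intervalIntegrable _ _) (c2.intervalIntegrable _ _),
    intervalIntegral.integral_const_mul] at h
  simp only [Real.sin_pi, Real.sin_zero, zero_div, sub_zero] at h
  linarith

lemma exact_two (h32 : b3 < b2) (h21 : b2 < b1) :
    (b2 - b3) * ∫ t in (0 : ℝ)..Real.pi, (1 + Real.cos t) / 2 /
        ((lam b1 b2 t - b3) * Real.sqrt (lam b1 b2 t - b3)) =
      ∫ t in (0 : ℝ)..Real.pi, (1 - Real.cos t) / 2 / Real.sqrt (lam b1 b2 t - b3) := by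
  have c1 := continuous_div_sqrt h32 h21
    (g := fun t => (1 - Real.cos t) / 2) (by fun_prop)
  have c2 := (continuous_div_cube h32 h21
    (g := fun t => (1 + Real.cos t) / 2) (by fun_prop)).const_mul (b2 - b3)
  have h := intervalIntegral.integral_eq_sub_of_hasDerivAt (a := 0) (b := Real.pi)
    (fun t _ => (hasDerivAt_sin_div h32 h21 t).congr_deriv
      (g' := (b2 - b3) * ((1 + Real.cos t) / 2 /
          ((lam b1 b2 t - b3) * Real.sqrt (lam b1 b2 t - b3))) -
        (1 - Real.cos t) / 2 / Real.sqrt (lam b1 b2 t - b3)) (by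
      have h1 := sqrt_D_pos h32 h21 t
      have h2 := Real.sqrt_pos.1 h1
      -- Both forms agree because `D = p (b1 - b3) + q (b2 - b3)` and `p + q = 1`.
      field_simp
      unfold lam
      ring)) ((c2.sub c1).intervalIntegrable _ _)
  rw [intervalIntegral.integral_sub (c2.intervalIntegrable _ _) (c1.intervalIntegrable _ _),
    intervalIntegral.integral_const_mul] at h
  simp only [Real.sin_pi, Real.sin_zero, zero_div, sub_zero] at h
  linarith

lemma cube_integral_pos (h32 : b3 < b2) (h21 : b2 < b1) {g : ℝ → ℝ} (hg : Continuous g)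
    (hpos : ∀ t ∈ Ioo 0 Real.pi, 0 < g t) :
    0 < ∫ t in (0 : ℝ)..Real.pi, g t /
        ((lam b1 b2 t - b3) * Real.sqrt (lam b1 b2 t - b3)) := by
  refine intervalIntegral.intervalIntegral_pos_of_pos_on
    ((continuous_div_cube h32 h21 hg).intervalIntegrable _ _) (fun t ht => ?_) Real.pi_pos
  have h1 := sqrt_D_pos h32 h21 t
  have h2 := Real.sqrt_pos.1 h1
  have := hpos t ht
  positivity

end Integrals

/-- The speed `∂Ω/∂K` in one variable `x` (with `c` the product of the other two branch points),
from the identity `2 P d = J1 - x J`, where `P` stands for the product of differences of branch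
points. -/
lemma speed_of_deriv (J K Om : ℝ → ℝ) {c x d J1 P : ℝ} (hx : 0 < x) (hc : 0 < c)
    (hJ : J x ≠ 0) (hd : d ≠ 0) (hP : P ≠ 0) (hJd : HasDerivAt J d x)
    (hK : ∀ y, K y = 2 * Real.pi / J y)
    (hOm : ∀ y, Om y = (4 * Real.pi / J y) * (1 / Real.sqrt (c * y)))
    (h : 2 * P * d = J1 - x * J x) :
    ∃ dK dO : ℝ, HasDerivAt K dK x ∧ HasDerivAt Om dO x ∧ dK ≠ 0 ∧
      dO / dK = 2 / Real.sqrt (c * x) * (1 - P / (x * (x + -J1 / J x))) := by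
  have hcx : 0 < c * x := mul_pos hc hx
  have hs := Real.sqrt_pos.2 hcx
  have hpi := Real.pi_ne_zero
  obtain rfl : K = fun y => 2 * Real.pi / J y := funext hK
  obtain rfl : Om = fun y => (4 * Real.pi / J y) * (1 / Real.sqrt (c * y)) := funext hOm
  have hl : HasDerivAt (fun y => c * y) c x := by
    simpa using (hasDerivAt_id x).const_mul c
  have hsq := Real.sq_sqrt hcx.le
  have e : x + -J1 / J x = -(2 * P * d) / J x := by
    rw [h]; field_simp; ring
  refine ⟨-(2 * Real.pi * d) / J x ^ 2,
    -(4 * Real.pi * d) / J x ^ 2 * (1 / Real.sqrt (c * x)) +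
      4 * Real.pi / J x * (-(1 / (2 * x * Real.sqrt (c * x)))), ?_, ?_, ?_, ?_⟩
  · exact ((hasDerivAt_const x (2 * Real.pi)).div hJd hJ).congr_deriv (by ring)
  · have h1 : HasDerivAt (fun y => 4 * Real.pi / J y) (-(4 * Real.pi * d) / J x ^ 2) x :=
      ((hasDerivAt_const x (4 * Real.pi)).div hJd hJ).congr_deriv (by ring)
    have h2 : HasDerivAt (fun y => 1 / Real.sqrt (c * y))
        (-(1 / (2 * x * Real.sqrt (c * x)))) x := by
      refine ((hasDerivAt_const x (1 : ℝ)).div (hl.sqrt hcx.ne') hs.ne').congr_deriv ?_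
      rw [hsq]
      field_simp
      ring
    exact h1.mul h2
  · have : 2 * Real.pi * d ≠ 0 := by positivity
    exact div_ne_zero (neg_ne_zero.2 this) (pow_ne_zero 2 hJ)
  · rw [e]
    field_simp
    ring


/-- the characteristic speeds of the one-phase Whitham equations of the
first negative KdV flow: with `𝒦 = 2π/𝒥₀`, `Ω = (4π/𝒥₀)(β¹β²β³)^{−1/2}`, the partial
derivatives exist, `∂𝒦/∂β^i ≠ 0`, and
`v^i = (∂Ω/∂β^i)/(∂𝒦/∂β^i) = (2/√(β¹β²β³))(1 − ∏_{j≠i}(β^i−β^j)/(β^i(β^i+α₁)))`. -/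
theorem stmt_13
    (J0 J1 K Om : ℝ → ℝ → ℝ → ℝ)
    (hJ0 : ∀ b1 b2 b3, J0 b1 b2 b3 =
      2 * ∫ l in b2..b1, 1 / Real.sqrt ((b1 - l) * (l - b2) * (l - b3)))
    (hJ1 : ∀ b1 b2 b3, J1 b1 b2 b3 =
      2 * ∫ l in b2..b1, l / Real.sqrt ((b1 - l) * (l - b2) * (l - b3)))
    (hK : ∀ b1 b2 b3, K b1 b2 b3 = 2 * Real.pi / J0 b1 b2 b3)
    (hOm : ∀ b1 b2 b3, Om b1 b2 b3 =
      (4 * Real.pi / J0 b1 b2 b3) * (1 / Real.sqrt (b1 * b2 * b3))) :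
    ∀ b1 b2 b3 : ℝ, 0 < b3 → b3 < b2 → b2 < b1 →
      ∃ dK1 dO1 dK2 dO2 dK3 dO3 : ℝ,
        HasDerivAt (fun x => K x b2 b3) dK1 b1 ∧ HasDerivAt (fun x => Om x b2 b3) dO1 b1 ∧
        HasDerivAt (fun x => K b1 x b3) dK2 b2 ∧ HasDerivAt (fun x => Om b1 x b3) dO2 b2 ∧
        HasDerivAt (fun x => K b1 b2 x) dK3 b3 ∧ HasDerivAt (fun x => Om b1 b2 x) dO3 b3 ∧
        dK1 ≠ 0 ∧ dK2 ≠ 0 ∧ dK3 ≠ 0 ∧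
        dO1 / dK1 = (2 / Real.sqrt (b1 * b2 * b3))
          * (1 - (b1 - b2) * (b1 - b3) / (b1 * (b1 + (-(J1 b1 b2 b3) / J0 b1 b2 b3)))) ∧
        dO2 / dK2 = (2 / Real.sqrt (b1 * b2 * b3))
          * (1 - (b2 - b1) * (b2 - b3) / (b2 * (b2 + (-(J1 b1 b2 b3) / J0 b1 b2 b3)))) ∧
        dO3 / dK3 = (2 / Real.sqrt (b1 * b2 * b3))
          * (1 - (b3 - b1) * (b3 - b2) / (b3 * (b3 + (-(J1 b1 b2 b3) / J0 b1 b2 b3)))) := by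
  intro b1 b2 b3 h3 h32 h21
  have h2 : 0 < b2 := h3.trans h32
  have h1 : 0 < b1 := h2.trans h21
  have hJ0' : ∀ x y z : ℝ, y < x → J0 x y z =
      2 * ∫ t in (0 : ℝ)..Real.pi, 1 / Real.sqrt (lam x y t - z) := fun x y z hxy => by
    rw [hJ0, integral_subst (fun _ => 1) z hxy]
  have hD : ∀ t, b2 - b3 ≤ lam b1 b2 t - b3 := fun t => by linarith [le_lam h21.le t]
  have hm : 0 < b2 - b3 := sub_pos.2 h32
  have hp1 : ∀ t, |(1 - Real.cos t) / 2| ≤ 1 := fun t => by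
    rw [abs_le]; constructor <;> linarith [Real.cos_le_one t, Real.neg_one_le_cos t]
  have hq1 : ∀ t, |(1 + Real.cos t) / 2| ≤ 1 := fun t => by
    rw [abs_le]; constructor <;> linarith [Real.cos_le_one t, Real.neg_one_le_cos t]
  have hlam := continuous_lam b1 b2
  set E1 := ∫ t in (0 : ℝ)..Real.pi, (1 - Real.cos t) / 2 /
    ((lam b1 b2 t - b3) * Real.sqrt (lam b1 b2 t - b3)) with hE1
  set E2 := ∫ t in (0 : ℝ)..Real.pi, (1 + Real.cos t) / 2 /
    ((lam b1 b2 t - b3) * Real.sqrt (lam b1 b2 t - b3)) with hE2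
  have hcos : ∀ t ∈ Ioo 0 Real.pi, -1 < Real.cos t ∧ Real.cos t < 1 := fun t ht => by
    have hs := pow_pos (Real.sin_pos_of_mem_Ioo ht) 2
    have := Real.sin_sq_add_cos_sq t
    constructor <;> nlinarith
  have E1pos : 0 < E1 := cube_integral_pos h32 h21 (by fun_prop) fun t ht => by
    linarith [(hcos t ht).2]
  have E2pos : 0 < E2 := cube_integral_pos h32 h21 (by fun_prop) fun t ht => by
    linarith [(hcos t ht).1]
  have hG2 := exact_one h32 h21
  have hG1 := exact_two h32 h21
  rw [← hE1] at hG2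
  rw [← hE2] at hG1
  have cp := continuous_div_sqrt h32 h21 (g := fun t => (1 - Real.cos t) / 2) (by fun_prop)
  have cq := continuous_div_sqrt h32 h21 (g := fun t => (1 + Real.cos t) / 2) (by fun_prop)
  have vJ0 : J0 b1 b2 b3 = 2 * ((b2 - b3) * E2 + (b1 - b3) * E1) := by
    rw [hJ0' _ _ _ h21, hG1, hG2, ← intervalIntegral.integral_add
      (cp.intervalIntegrable _ _) (cq.intervalIntegrable _ _)]
    congr 2
    ext t
    ring
  have vJ1 : J1 b1 b2 b3 = 2 * (b1 * ((b2 - b3) * E2) + b2 * ((b1 - b3) * E1)) := by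
    rw [hJ1, integral_subst (fun l => l) b3 h21, hG1, hG2,
      ← intervalIntegral.integral_const_mul b1, ← intervalIntegral.integral_const_mul b2,
      ← intervalIntegral.integral_add ((cp.const_mul b1).intervalIntegrable _ _)
        ((cq.const_mul b2).intervalIntegrable _ _)]
    congr 2
    ext t
    rw [show lam b1 b2 t / Real.sqrt (lam b1 b2 t - b3) = (b1 * ((1 - Real.cos t) / 2) +
      b2 * ((1 + Real.cos t) / 2)) / Real.sqrt (lam b1 b2 t - b3) from rfl]
    ring
  have J0pos : 0 < J0 b1 b2 b3 := by
    have h13 : 0 < b1 - b3 := by linarith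
    rw [vJ0]; positivity
  have d1 : HasDerivAt (fun x => J0 x b2 b3) (-E1) b1 := by
    have h := (hasDerivAt_integral_sqrt (fun t => b2 * ((1 + Real.cos t) / 2) - b3)
      (fun t => (1 - Real.cos t) / 2) (by fun_prop) (by fun_prop) hp1 (x0 := b1) hm
      (fun t => by have := hD t; unfold lam at this; linarith)).const_mul 2
    have hev : (fun x => J0 x b2 b3) =ᶠ[𝓝 b1] fun x =>
        2 * ∫ t in (0 : ℝ)..Real.pi, 1 / Real.sqrt (lam x b2 t - b3) := by
      filter_upwards [lt_mem_nhds h21] with x hx using hJ0' x b2 b3 hx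
    refine HasDerivAt.congr_of_eventuallyEq (h.congr_deriv ?_) (hev.trans ?_)
    · rw [hE1, ← intervalIntegral.integral_neg, ← intervalIntegral.integral_const_mul]
      congr 1
      ext t
      rw [show b2 * ((1 + Real.cos t) / 2) - b3 + b1 * ((1 - Real.cos t) / 2) =
        lam b1 b2 t - b3 by unfold lam; ring]
      generalize (lam b1 b2 t - b3) * Real.sqrt (lam b1 b2 t - b3) = y
      ring
    · refine Eventually.of_forall fun x => ?_
      dsimp only
      congr 2
      ext t
      rw [show b2 * ((1 + Real.cos t) / 2) - b3 + x * ((1 - Real.cos t) / 2) =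
        lam x b2 t - b3 by unfold lam; ring]
  have d2 : HasDerivAt (fun x => J0 b1 x b3) (-E2) b2 := by
    have h := (hasDerivAt_integral_sqrt (fun t => b1 * ((1 - Real.cos t) / 2) - b3)
      (fun t => (1 + Real.cos t) / 2) (by fun_prop) (by fun_prop) hq1 (x0 := b2) hm
      (fun t => by have := hD t; unfold lam at this; linarith)).const_mul 2
    have hev : (fun x => J0 b1 x b3) =ᶠ[𝓝 b2] fun x =>
        2 * ∫ t in (0 : ℝ)..Real.pi, 1 / Real.sqrt (lam b1 x t - b3) := by
      filter_upwards [gt_mem_nhds h21] with x hx using hJ0' b1 x b3 hx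
    refine HasDerivAt.congr_of_eventuallyEq (h.congr_deriv ?_) (hev.trans ?_)
    · rw [hE2, ← intervalIntegral.integral_neg, ← intervalIntegral.integral_const_mul]
      congr 1
      ext t
      rw [show b1 * ((1 - Real.cos t) / 2) - b3 + b2 * ((1 + Real.cos t) / 2) =
        lam b1 b2 t - b3 by unfold lam; ring]
      generalize (lam b1 b2 t - b3) * Real.sqrt (lam b1 b2 t - b3) = y
      ring
    · refine Eventually.of_forall fun x => ?_
      dsimp only
      congr 2
      ext t
      rw [show b1 * ((1 - Real.cos t) / 2) - b3 + x * ((1 + Real.cos t) / 2) =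
        lam b1 x t - b3 by unfold lam; ring]
  have d3 : HasDerivAt (fun x => J0 b1 b2 x) (E1 + E2) b3 := by
    have h := (hasDerivAt_integral_sqrt (fun t => lam b1 b2 t) (fun _ => -1) hlam
      (by fun_prop) (fun _ => by norm_num) (x0 := b3) hm
      (fun t => by have := hD t; linarith)).const_mul 2
    have hev : (fun x => J0 b1 b2 x) =ᶠ[𝓝 b3] fun x =>
        2 * ∫ t in (0 : ℝ)..Real.pi, 1 / Real.sqrt (lam b1 b2 t - x) :=
      Eventually.of_forall fun x => hJ0' b1 b2 x h21
    refine HasDerivAt.congr_of_eventuallyEq (h.congr_deriv ?_) (hev.trans ?_)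
    · rw [hE1, hE2, ← intervalIntegral.integral_const_mul, ← intervalIntegral.integral_add
        ((continuous_div_cube h32 h21 (by fun_prop)).intervalIntegrable _ _)
        ((continuous_div_cube h32 h21 (by fun_prop)).intervalIntegrable _ _)]
      congr 1
      ext t
      rw [show lam b1 b2 t + b3 * -1 = lam b1 b2 t - b3 by ring]
      generalize (lam b1 b2 t - b3) * Real.sqrt (lam b1 b2 t - b3) = y
      ring
    · refine Eventually.of_forall fun x => ?_
      dsimp only
      congr 2
      ext t
      rw [show lam b1 b2 t + x * -1 = lam b1 b2 t - x by ring]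
  have n12 : b1 - b2 ≠ 0 := (sub_pos.2 h21).ne'
  have n13 : b1 - b3 ≠ 0 := (sub_pos.2 (h32.trans h21)).ne'
  have n23 : b2 - b3 ≠ 0 := hm.ne'
  obtain ⟨dK1, dO1, k1, o1, z1, s1⟩ := speed_of_deriv _ (fun x => K x b2 b3)
    (fun x => Om x b2 b3) (c := b2 * b3) (J1 := J1 b1 b2 b3) (P := (b1 - b2) * (b1 - b3))
    h1 (by positivity) J0pos.ne' (neg_ne_zero.2 E1pos.ne') (mul_ne_zero n12 n13) d1
    (fun y => hK y b2 b3)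
    (fun y => by rw [hOm, show y * b2 * b3 = b2 * b3 * y by ring])
    (by simp only [vJ0, vJ1]; ring)
  obtain ⟨dK2, dO2, k2, o2, z2, s2⟩ := speed_of_deriv _ (fun x => K b1 x b3)
    (fun x => Om b1 x b3) (c := b1 * b3) (J1 := J1 b1 b2 b3) (P := (b2 - b1) * (b2 - b3))
    h2 (by positivity) J0pos.ne' (neg_ne_zero.2 E2pos.ne')
    (mul_ne_zero (sub_neg.2 h21).ne n23) d2
    (fun y => hK b1 y b3)
    (fun y => by rw [hOm, show b1 * y * b3 = b1 * b3 * y by ring])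
    (by simp only [vJ0, vJ1]; ring)
  obtain ⟨dK3, dO3, k3, o3, z3, s3⟩ := speed_of_deriv _ (fun x => K b1 b2 x)
    (fun x => Om b1 b2 x) (c := b1 * b2) (J1 := J1 b1 b2 b3) (P := (b3 - b1) * (b3 - b2))
    h3 (by positivity) J0pos.ne' (add_pos E1pos E2pos).ne'
    (mul_ne_zero (sub_neg.2 (h32.trans h21)).ne (sub_neg.2 h32).ne) d3
    (fun y => hK b1 b2 y)
    (fun y => hOm b1 b2 y)
    (by simp only [vJ0, vJ1]; ring)
  rw [show b2 * b3 * b1 = b1 * b2 * b3 by ring] at s1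
  rw [show b1 * b3 * b2 = b1 * b2 * b3 by ring] at s2
  exact ⟨dK1, dO1, dK2, dO2, dK3, dO3, k1, o1, k2, o2, k3, o3, z1, z2, z3, s1, s2, s3⟩
end
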